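/- arXiv:2303.12444 — 6 statements merged into one kernel-verified Lean document; each statement's English description precedes it below -/
import Mathlib

section
/- Let M be a finite set of items and let n agents have normalized monotone submodular valuations v_1, …, v_n : 2^M → ℝ≥0 and entitlements b_1, …, b_n ∈ (0,1] with Σ_i b_i = 1. Then there exists an allocation (A_1, …, A_n) of pairwise disjoint subsets of M such that for every agent i, v_i(A_i) ≥ (1/(3 − 2·b_i)) · APS(b_i, v_i, M). -/
/-!
The allocation is produced by a bidding game. Put `s i = APS (b i) (v i) M` and let the target of
agent `i` be `r i = s i / (3 - 2 * b i)`. Agent `i` has budget `b i`; as long as her bundle `A i` is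
worth less than `r i`, she looks at a remaining item of largest marginal value `m` and bids
`min (b i) (b i * m / (2 * r i))`. The highest bidder takes her item and pays her bid.

Budgets are never exceeded: before each win the agent has spent at most
`b i * v i (A i) / (2 * r i) < b i / 2`, and a bid above `b i / 2` needs `m > r i`, which can happen
only at her first win, since marginal values decrease. By submodularity, an item lost by an
unsatisfied agent `i` keeps a price at least as large as the bid of `i` for it computed from her current
bundle. These facts form the invariant `GameInv`, and `GameInv.step` preserves it.

Suppose that all items are gone and agent `i` is unsatisfied (`GameInv.satisfied_of_exhausted`).
Choose `z` feasible for the anyprice share with `D = z - v i (A i) > (1 - 1 / (3 - 2 * b i)) * s i`,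
and let `w e` be the marginal value of `e` over `A i`. Every bundle `S` of value at least `z`
satisfies `D ≤ ∑ e ∈ S, min D (w e)`; averaging over the weights gives
`D ≤ b i * ∑ e, min D (w e)`. Each lost item satisfies `b i * min D (w e) ≤ max D (2 * r i) * p e`,
and the other agents pay at most `1 - b i` in total, so `D ≤ max D (2 * r i) * (1 - b i)`. This is
absurd, because `b i > 0` and `2 * r i * (1 - b i) = (1 - 1 / (3 - 2 * b i)) * s i < D`.
-/

open Finset

/-- The anyprice share of an agent with entitlement `b` and valuation `v`
on the set `M` of items: the supremum of all `z ≥ 0` for which there exist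
nonnegative weights `lam` on subsets of `M` summing to 1, supported on bundles
of value at least `z`, such that each item appears in bundles of total weight
at most `b`. -/
noncomputable def APS {ι : Type*} [DecidableEq ι] (b : ℝ) (v : Finset ι → ℝ)
    (M : Finset ι) : ℝ :=
  sSup {z : ℝ | 0 ≤ z ∧ ∃ lam : Finset ι → ℝ,
    (∀ S, 0 ≤ lam S) ∧
    (∑ S ∈ M.powerset, lam S) = 1 ∧
    (∀ S ∈ M.powerset, v S < z → lam S = 0) ∧
    (∀ e ∈ M, (∑ S ∈ M.powerset.filter (fun S => e ∈ S), lam S) ≤ b)}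

/-! ### Marginal values of submodular functions -/

/-- Marginal values of a monotone submodular function decrease as the bundle grows. -/
lemma marginal_anti {ι : Type*} [DecidableEq ι] {M : Finset ι} {v : Finset ι → ℝ}
    (hmono : ∀ S T : Finset ι, S ⊆ T → T ⊆ M → v S ≤ v T)
    (hsubmod : ∀ S T : Finset ι, S ⊆ M → T ⊆ M → v (S ∪ T) + v (S ∩ T) ≤ v S + v T)
    {S T : Finset ι} (hST : S ⊆ T) (hT : T ⊆ M) {e : ι} (he : e ∈ M) :
    v (insert e T) - v T ≤ v (insert e S) - v S := by
  have hS : insert e S ⊆ M := insert_subset he (hST.trans hT)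
  by_cases h : e ∈ T
  · rw [insert_eq_of_mem h]
    have := hmono S (insert e S) (subset_insert e S) hS
    linarith
  · have h1 := hsubmod (insert e S) T hS hT
    have h2 : insert e S ∪ T = insert e T := by
      rw [insert_union, union_eq_right.2 hST]
    have h3 : insert e S ∩ T = S := by
      rw [insert_inter_of_notMem h, inter_eq_left.2 hST]
    rw [h2, h3] at h1
    linarith

lemma union_le_sum_marginal {ι : Type*} [DecidableEq ι] {M : Finset ι} {v : Finset ι → ℝ}
    (hmono : ∀ S T : Finset ι, S ⊆ T → T ⊆ M → v S ≤ v T)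
    (hsubmod : ∀ S T : Finset ι, S ⊆ M → T ⊆ M → v (S ∪ T) + v (S ∩ T) ≤ v S + v T)
    {A : Finset ι} (hA : A ⊆ M) (S : Finset ι) (hS : S ⊆ M) :
    v (S ∪ A) - v A ≤ ∑ e ∈ S, (v (insert e A) - v A) := by
  induction S using Finset.induction_on with
  | empty => simp
  | insert a S ha ih =>
    have haM : a ∈ M := hS (mem_insert_self a S)
    have hSM : S ⊆ M := (subset_insert a S).trans hS
    rw [sum_insert ha, insert_union]
    have h1 := ih hSM
    have h2 := marginal_anti hmono hsubmod (subset_union_right : A ⊆ S ∪ A)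
      (union_subset hSM hA) haM
    linarith

/-- A bundle bounds its gain over `A` by the sum of marginals, each of which may be truncated at
any level `D` not exceeding that gain. -/
lemma le_sum_min_marginal {ι : Type*} [DecidableEq ι] {M : Finset ι} {v : Finset ι → ℝ}
    (hmono : ∀ S T : Finset ι, S ⊆ T → T ⊆ M → v S ≤ v T)
    (hsubmod : ∀ S T : Finset ι, S ⊆ M → T ⊆ M → v (S ∪ T) + v (S ∩ T) ≤ v S + v T)
    {A : Finset ι} (hA : A ⊆ M) (S : Finset ι) (hS : S ⊆ M) {D : ℝ} (hD : 0 ≤ D)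
    (hDS : D ≤ v S - v A) :
    D ≤ ∑ e ∈ S, min D (v (insert e A) - v A) := by
  have hg : ∀ e ∈ S, 0 ≤ min D (v (insert e A) - v A) := fun e he =>
    le_min hD (sub_nonneg.2 (hmono _ _ (subset_insert e A) (insert_subset (hS he) hA)))
  by_cases h : ∃ e ∈ S, D ≤ v (insert e A) - v A
  · obtain ⟨e, he, hDe⟩ := h
    calc D = min D (v (insert e A) - v A) := (min_eq_left hDe).symm
      _ ≤ _ := single_le_sum (f := fun e => min D (v (insert e A) - v A)) hg he
  · push Not at h
    rw [sum_congr rfl fun e he => min_eq_right (h e he).le]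
    have h1 := union_le_sum_marginal hmono hsubmod hA S hS
    have h2 := hmono S (S ∪ A) subset_union_left (union_subset hS hA)
    linarith

/-! ### Averaging over the weights of the anyprice share -/

lemma le_mul_sum_of_weights {ι : Type*} [DecidableEq ι] {M : Finset ι} {v : Finset ι → ℝ}
    {b z D : ℝ} {lam : Finset ι → ℝ} {g : ι → ℝ}
    (h0 : ∀ S, 0 ≤ lam S) (h1 : ∑ S ∈ M.powerset, lam S = 1)
    (hz : ∀ S ∈ M.powerset, v S < z → lam S = 0)
    (hb : ∀ e ∈ M, (∑ S ∈ M.powerset.filter (fun S => e ∈ S), lam S) ≤ b)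
    (hg : ∀ e ∈ M, 0 ≤ g e)
    (hD : ∀ S ⊆ M, z ≤ v S → D ≤ ∑ e ∈ S, g e) :
    D ≤ b * ∑ e ∈ M, g e := by
  calc D = ∑ S ∈ M.powerset, lam S * D := by rw [← sum_mul, h1, one_mul]
    _ ≤ ∑ S ∈ M.powerset, lam S * ∑ e ∈ S, g e := by
        refine sum_le_sum fun S hS => ?_
        rcases lt_or_ge (v S) z with h | h
        · simp [hz S hS h]
        · exact mul_le_mul_of_nonneg_left (hD S (mem_powerset.1 hS) h) (h0 S)
    _ = ∑ S ∈ M.powerset, ∑ e ∈ M, if e ∈ S then lam S * g e else 0 := by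
        refine sum_congr rfl fun S hS => ?_
        rw [← sum_filter, filter_mem_eq_inter, inter_eq_right.2 (mem_powerset.1 hS), mul_sum]
    _ = ∑ e ∈ M, (∑ S ∈ M.powerset.filter (fun S => e ∈ S), lam S) * g e := by
        rw [sum_comm]
        refine sum_congr rfl fun e _ => ?_
        rw [← sum_filter, sum_mul]
    _ ≤ ∑ e ∈ M, b * g e :=
        sum_le_sum fun e he => mul_le_mul_of_nonneg_right (hb e he) (hg e he)
    _ = b * ∑ e ∈ M, g e := (mul_sum _ _ _).symm

lemma exists_weights_of_lt_APS {ι : Type*} [DecidableEq ι] {M : Finset ι} {v : Finset ι → ℝ}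
    {b x : ℝ} (hb : 0 ≤ b) (hv : v ∅ = 0) (hx : x < APS b v M) :
    ∃ z, x < z ∧ ∃ lam : Finset ι → ℝ,
      (∀ S, 0 ≤ lam S) ∧
      (∑ S ∈ M.powerset, lam S) = 1 ∧
      (∀ S ∈ M.powerset, v S < z → lam S = 0) ∧
      (∀ e ∈ M, (∑ S ∈ M.powerset.filter (fun S => e ∈ S), lam S) ≤ b) := by
  unfold APS at hx
  have hexists := fun hne => exists_lt_of_lt_csSup hne hx
  obtain ⟨z, ⟨_, hz⟩, hxz⟩ := hexists <| by
    -- Putting all the weight on the empty bundle shows that `0` is feasible.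
    refine ⟨0, le_rfl, fun S => if S = ∅ then 1 else 0, fun S => ?_, by simp, fun S _ hS => ?_,
      fun e _ => ?_⟩
    · dsimp only
      split_ifs <;> norm_num
    · refine if_neg ?_
      rintro rfl
      linarith
    · rw [sum_eq_zero]
      · exact hb
      · intro S hS
        exact if_neg (ne_empty_of_mem (mem_filter.1 hS).2)
  exact ⟨z, hxz, hz⟩

/-! ### The bidding game -/

/-- The bid, out of a budget `b`, of an agent with target `r` for an item of marginal value `m`. -/
noncomputable def bid (b r m : ℝ) : ℝ := min b (b * m / (2 * r))

lemma bid_mono {b r m m' : ℝ} (hb : 0 ≤ b) (hr : 0 ≤ r) (h : m ≤ m') :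
    bid b r m ≤ bid b r m' := by
  unfold bid
  gcongr

/-- The invariant of the bidding game, for bundles `A` won so far and prices `p` paid for them.
The agents with `v i (A i) < r i` are those still bidding. -/
structure GameInv {ι : Type*} [DecidableEq ι] {n : ℕ} (M : Finset ι) (v : Fin n → Finset ι → ℝ)
    (b r : Fin n → ℝ) (A : Fin n → Finset ι) (p : ι → ℝ) : Prop where
  sub : ∀ i, A i ⊆ M
  disj : ∀ i j, i ≠ j → Disjoint (A i) (A j)
  budget : ∀ i, ∑ e ∈ A i, p e ≤ b i
  /-- An agent still bidding has spent at most in proportion to the value obtained. -/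
  spent : ∀ i, v i (A i) < r i → ∑ e ∈ A i, p e ≤ b i * v i (A i) / (2 * r i)
  /-- After the first win of an agent still bidding, no remaining item is worth more than the
  target. -/
  small : ∀ i, v i (A i) < r i → A i = ∅ ∨
    ∀ e ∈ M, (∀ j, e ∉ A j) → v i (insert e (A i)) - v i (A i) ≤ r i
  /-- An item lost by an agent still bidding costs at least the bid of that agent on it. -/
  price : ∀ i, v i (A i) < r i → ∀ j, j ≠ i → ∀ e ∈ A j,
    bid (b i) (r i) (v i (insert e (A i)) - v i (A i)) ≤ p e

lemma GameInv.start {ι : Type*} [DecidableEq ι] {n : ℕ} {M : Finset ι}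
    {v : Fin n → Finset ι → ℝ} {b r : Fin n → ℝ} (hb : ∀ i, 0 < b i) (hnorm : ∀ i, v i ∅ = 0) :
    GameInv M v b r (fun _ => ∅) (fun _ => 0) where
  sub := by simp
  disj := by simp
  budget i := by simpa using (hb i).le
  spent i _ := by simp [hnorm]
  small i _ := Or.inl rfl
  price := by simp

/-- One round: agent `i`, still bidding, takes her best remaining item `e`, and her bid on it is at
least the bid on `e` of every other agent still bidding. -/
lemma GameInv.step {ι : Type*} [DecidableEq ι] {n : ℕ} {M : Finset ι}
    {v : Fin n → Finset ι → ℝ} {b r : Fin n → ℝ} {A : Fin n → Finset ι} {p : ι → ℝ}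
    (hb : ∀ i, 0 < b i)
    (hnonneg : ∀ i, ∀ S ⊆ M, 0 ≤ v i S)
    (hmono : ∀ i, ∀ S T : Finset ι, S ⊆ T → T ⊆ M → v i S ≤ v i T)
    (hsubmod : ∀ i, ∀ S T : Finset ι, S ⊆ M → T ⊆ M →
      v i (S ∪ T) + v i (S ∩ T) ≤ v i S + v i T)
    (h : GameInv M v b r A p) {i : Fin n} (hi : v i (A i) < r i) {e : ι} (heM : e ∈ M)
    (heA : ∀ j, e ∉ A j)
    (hbest : ∀ f ∈ M, (∀ j, f ∉ A j) →
      v i (insert f (A i)) - v i (A i) ≤ v i (insert e (A i)) - v i (A i))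
    (hwin : ∀ j, v j (A j) < r j →
      bid (b j) (r j) (v j (insert e (A j)) - v j (A j)) ≤
        bid (b i) (r i) (v i (insert e (A i)) - v i (A i))) :
    GameInv M v b r (Function.update A i (insert e (A i)))
      (Function.update p e (bid (b i) (r i) (v i (insert e (A i)) - v i (A i)))) := by
  set q := bid (b i) (r i) (v i (insert e (A i)) - v i (A i)) with hq
  set A' := Function.update A i (insert e (A i)) with hA'
  set p' := Function.update p e q with hp'
  have hAi : A' i = insert e (A i) := by simp [hA']
  have hAj : ∀ j, j ≠ i → A' j = A j := fun j hj => by simp [hA', hj]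
  have hpe : p' e = q := by simp [hp']
  have hpf : ∀ f, f ≠ e → p' f = p f := fun f hf => by simp [hp', hf]
  have hpA : ∀ j, ∑ f ∈ A j, p' f = ∑ f ∈ A j, p f := fun j =>
    sum_congr rfl fun f hf => hpf f (by rintro rfl; exact heA j hf)
  have hsum : ∑ f ∈ A' i, p' f = q + ∑ f ∈ A i, p f := by
    rw [hAi, sum_insert (heA i), hpe, hpA]
  have hsubi : insert e (A i) ⊆ M := insert_subset heM (h.sub i)
  have hvi : 0 ≤ v i (A i) := hnonneg i _ (h.sub i)
  have hr : 0 < r i := hvi.trans_lt hi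
  have hbi := hb i
  -- Expenditure stays in proportion to value.
  have hspent : q + ∑ f ∈ A i, p f ≤ b i * v i (insert e (A i)) / (2 * r i) := by
    have h1 : q ≤ b i * (v i (insert e (A i)) - v i (A i)) / (2 * r i) := min_le_right _ _
    have h2 := h.spent i hi
    calc q + ∑ f ∈ A i, p f
        ≤ b i * (v i (insert e (A i)) - v i (A i)) / (2 * r i)
          + b i * v i (A i) / (2 * r i) := add_le_add h1 h2
      _ = _ := by ring
  refine ⟨?_, ?_, ?_, ?_, ?_, ?_⟩
  · intro j
    by_cases hj : j = i
    · subst hj; rwa [hAi]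
    · rw [hAj j hj]; exact h.sub j
  · have key : ∀ j, j ≠ i → Disjoint (insert e (A i)) (A j) := fun j hj =>
      disjoint_insert_left.2 ⟨heA j, h.disj i j hj.symm⟩
    intro j k hjk
    by_cases hj : j = i
    · subst hj
      rw [hAi, hAj k hjk.symm]
      exact key k hjk.symm
    · by_cases hk : k = i
      · subst hk
        rw [hAi, hAj j hj]
        exact (key j hj).symm
      · rw [hAj j hj, hAj k hk]
        exact h.disj j k hjk
  · intro j
    by_cases hj : j = i
    · subst hj
      rw [hsum]
      rcases h.small j hi with h0 | hs
      · rw [h0]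
        simp only [sum_empty, add_zero]
        exact min_le_left _ _
      · have h1 := hs e heM heA
        have h2 := h.spent j hi
        have h3 : q ≤ b j * (v j (insert e (A j)) - v j (A j)) / (2 * r j) := min_le_right _ _
        calc q + ∑ f ∈ A j, p f
            ≤ b j * (v j (insert e (A j)) - v j (A j)) / (2 * r j)
              + b j * v j (A j) / (2 * r j) := add_le_add h3 h2
          _ ≤ b j * r j / (2 * r j) + b j * r j / (2 * r j) := by gcongr
          _ = b j := by field_simp; norm_num
    · rw [hAj j hj, hpA]; exact h.budget j
  · intro j hlt
    by_cases hj : j = i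
    · subst hj
      rw [hsum, hAi]
      exact hspent
    · rw [hAj j hj] at hlt ⊢
      rw [hpA]; exact h.spent j hlt
  · intro j hlt
    have hrem : ∀ f, (∀ k, f ∉ A' k) → ∀ k, f ∉ A k := by
      intro f hf k hk
      apply hf k
      by_cases hki : k = i
      · subst hki; rw [hAi]; exact mem_insert_of_mem hk
      · rw [hAj k hki]; exact hk
    by_cases hj : j = i
    · subst hj
      right
      rw [hAi] at hlt ⊢
      intro f hfM hf
      -- The new marginal is at most the old one, which is at most that of `e`, which is at most
      -- `v j (insert e (A j))`.
      have h1 := marginal_anti (hmono j) (hsubmod j) (subset_insert e (A j)) hsubi hfM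
      have h2 := hbest f hfM (hrem f hf)
      linarith
    · rw [hAj j hj] at hlt ⊢
      exact (h.small j hlt).imp id fun hs f hfM hf => hs f hfM (hrem f hf)
  · intro j hlt k hkj f hf
    by_cases hj : j = i
    · subst hj
      rw [hAj k hkj] at hf
      have hfe : f ≠ e := by rintro rfl; exact heA k hf
      rw [hpf f hfe, hAi]
      exact (bid_mono hbi.le hr.le (marginal_anti (hmono j) (hsubmod j)
        (subset_insert e (A j)) hsubi (h.sub k hf))).trans (h.price j hi k hkj f hf)
    · rw [hAj j hj] at hlt ⊢
      by_cases hfe : f = e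
      · subst hfe
        rw [hpe]
        exact hwin j hlt
      · rw [hpf f hfe]
        refine h.price j hlt k hkj f ?_
        by_cases hk : k = i
        · subst hk
          rw [hAi] at hf
          exact mem_of_mem_insert_of_ne hf hfe
        · rwa [hAj k hk] at hf

/-- When no item remains, every agent has reached the target `APS / (3 - 2 * b i)`. -/
lemma GameInv.satisfied_of_exhausted {ι : Type*} [DecidableEq ι] {n : ℕ} {M : Finset ι}
    {v : Fin n → Finset ι → ℝ} {b r : Fin n → ℝ} {A : Fin n → Finset ι} {p : ι → ℝ}
    (hb : ∀ i, 0 < b i ∧ b i ≤ 1) (hbsum : ∑ i, b i = 1) (hnorm : ∀ i, v i ∅ = 0)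
    (hnonneg : ∀ i, ∀ S ⊆ M, 0 ≤ v i S)
    (hmono : ∀ i, ∀ S T : Finset ι, S ⊆ T → T ⊆ M → v i S ≤ v i T)
    (hsubmod : ∀ i, ∀ S T : Finset ι, S ⊆ M → T ⊆ M →
      v i (S ∪ T) + v i (S ∩ T) ≤ v i S + v i T)
    (hr : ∀ i, APS (b i) (v i) M = (3 - 2 * b i) * r i)
    (h : GameInv M v b r A p) (hall : ∀ e ∈ M, ∃ j, e ∈ A j) (i : Fin n) :
    r i ≤ v i (A i) := by
  by_contra! hi
  obtain ⟨hb0, hb1⟩ := hb i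
  have hr0 : 0 < r i := (hnonneg i _ (h.sub i)).trans_lt hi
  have hlt : v i (A i) + 2 * r i * (1 - b i) < APS (b i) (v i) M := by
    rw [hr]; linarith
  obtain ⟨z, hz, lam, h0, h1, hlz, hlb⟩ := exists_weights_of_lt_APS hb0.le (hnorm i) hlt
  set D := z - v i (A i) with hD
  have hDK : 2 * r i * (1 - b i) < D := by linarith
  have hD0 : 0 < D := by
    have : 0 ≤ 2 * r i * (1 - b i) := mul_nonneg (by linarith) (by linarith)
    linarith
  set g : ι → ℝ := fun e => min D (v i (insert e (A i)) - v i (A i)) with hg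
  have hg0 : ∀ e ∈ M, 0 ≤ g e := fun e he => le_min hD0.le
    (sub_nonneg.2 (hmono i _ _ (subset_insert e _) (insert_subset he (h.sub i))))
  have hmain : D ≤ b i * ∑ e ∈ M, g e :=
    le_mul_sum_of_weights h0 h1 hlz hlb hg0 fun S hS hzS =>
      le_sum_min_marginal (hmono i) (hsubmod i) (h.sub i) S hS hD0.le (by linarith)
  have hM : M = univ.biUnion A := by
    ext e
    simp only [mem_biUnion, mem_univ, true_and]
    exact ⟨hall e, fun ⟨j, hj⟩ => h.sub j hj⟩
  have hgi : ∑ e ∈ A i, g e = 0 := sum_eq_zero fun e he => by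
    simp [hg, insert_eq_of_mem he, hD0.le]
  have hsplit : ∑ e ∈ M, g e = ∑ j ∈ univ.erase i, ∑ e ∈ A j, g e := by
    rw [hM, sum_biUnion fun j _ k _ hjk => h.disj j k hjk, ← add_sum_erase _ _ (mem_univ i), hgi,
      zero_add]
  set K := max D (2 * r i) with hK
  have hK0 : 0 < K := lt_max_of_lt_left hD0
  -- Capping at `D` matters for items on which the bid was the full budget.
  have hitem : ∀ j, j ≠ i → ∀ e ∈ A j, b i * g e ≤ K * p e := by
    intro j hj e he
    have hp := h.price i hi j hj e he
    refine le_trans ?_ (mul_le_mul_of_nonneg_left hp hK0.le)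
    unfold bid
    rw [mul_min_of_nonneg _ _ hK0.le]
    have hw : 0 ≤ v i (insert e (A i)) - v i (A i) :=
      sub_nonneg.2 (hmono i _ _ (subset_insert e _) (insert_subset (h.sub j he) (h.sub i)))
    refine le_min ?_ ?_
    · rw [mul_comm]
      exact mul_le_mul_of_nonneg_right ((min_le_left _ _).trans (le_max_left _ _)) hb0.le
    · calc b i * g e ≤ b i * (v i (insert e (A i)) - v i (A i)) :=
            mul_le_mul_of_nonneg_left (min_le_right _ _) hb0.le
        _ = 2 * r i * (b i * (v i (insert e (A i)) - v i (A i)) / (2 * r i)) := by field_simp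
        _ ≤ K * (b i * (v i (insert e (A i)) - v i (A i)) / (2 * r i)) :=
            mul_le_mul_of_nonneg_right (le_max_right _ _) (by positivity)
  have hfin : D ≤ K * (1 - b i) := by
    calc D ≤ b i * ∑ j ∈ univ.erase i, ∑ e ∈ A j, g e := hsplit ▸ hmain
      _ = ∑ j ∈ univ.erase i, ∑ e ∈ A j, b i * g e := by simp only [mul_sum]
      _ ≤ ∑ j ∈ univ.erase i, ∑ e ∈ A j, K * p e :=
          sum_le_sum fun j hj => sum_le_sum fun e he => hitem j (ne_of_mem_erase hj) e he
      _ = K * ∑ j ∈ univ.erase i, ∑ e ∈ A j, p e := by simp only [mul_sum]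
      _ ≤ K * ∑ j ∈ univ.erase i, b j :=
          mul_le_mul_of_nonneg_left (sum_le_sum fun j _ => h.budget j) hK0.le
      _ = K * (1 - b i) := by
          rw [← hbsum, ← add_sum_erase _ _ (mem_univ i), add_sub_cancel_left]
  rcases max_cases D (2 * r i) with ⟨hc, _⟩ | ⟨hc, _⟩
  · rw [hK, hc] at hfin
    nlinarith [mul_pos hD0 hb0]
  · rw [hK, hc] at hfin
    linarith

/-- Playing the game from any state satisfying the invariant brings every agent to the target. -/
lemma GameInv.exists_satisfied {ι : Type*} [DecidableEq ι] {n : ℕ} {M : Finset ι}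
    {v : Fin n → Finset ι → ℝ} {b r : Fin n → ℝ}
    (hb : ∀ i, 0 < b i ∧ b i ≤ 1) (hbsum : ∑ i, b i = 1) (hnorm : ∀ i, v i ∅ = 0)
    (hnonneg : ∀ i, ∀ S ⊆ M, 0 ≤ v i S)
    (hmono : ∀ i, ∀ S T : Finset ι, S ⊆ T → T ⊆ M → v i S ≤ v i T)
    (hsubmod : ∀ i, ∀ S T : Finset ι, S ⊆ M → T ⊆ M →
      v i (S ∪ T) + v i (S ∩ T) ≤ v i S + v i T)
    (hr : ∀ i, APS (b i) (v i) M = (3 - 2 * b i) * r i) (k : ℕ) :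
    ∀ (A : Fin n → Finset ι) (p : ι → ℝ), GameInv M v b r A p →
      (M \ univ.biUnion A).card = k →
      ∃ A' p', GameInv M v b r A' p' ∧ ∀ i, r i ≤ v i (A' i) := by
  induction k with
  | zero =>
    intro A p h hk
    refine ⟨A, p, h, h.satisfied_of_exhausted hb hbsum hnorm hnonneg hmono hsubmod hr ?_⟩
    intro e he
    simpa using sdiff_eq_empty_iff_subset.1 (card_eq_zero.1 hk) he
  | succ k ih =>
    intro A p h hk
    by_cases hsat : ∀ i, r i ≤ v i (A i)
    · exact ⟨A, p, h, hsat⟩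
    push Not at hsat
    obtain ⟨i₀, hi₀⟩ := hsat
    have hne : (M \ univ.biUnion A).Nonempty := card_pos.1 (by omega)
    have hmem : ∀ e, e ∈ M \ univ.biUnion A ↔ e ∈ M ∧ ∀ j, e ∉ A j := by simp
    have hbest : ∀ i, ∃ e ∈ M \ univ.biUnion A, ∀ f ∈ M \ univ.biUnion A,
        v i (insert f (A i)) - v i (A i) ≤ v i (insert e (A i)) - v i (A i) := fun i =>
      exists_max_image _ (fun f => v i (insert f (A i)) - v i (A i)) hne
    choose best hbestmem hbest using hbest
    obtain ⟨i, hi, himax⟩ := exists_max_image (univ.filter fun i => v i (A i) < r i)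
      (fun i => bid (b i) (r i) (v i (insert (best i) (A i)) - v i (A i)))
      ⟨i₀, by simpa using hi₀⟩
    have hi' : v i (A i) < r i := by simpa using hi
    obtain ⟨heM, heA⟩ := (hmem _).1 (hbestmem i)
    refine ih _ _ (h.step (fun i => (hb i).1) hnonneg hmono hsubmod hi' heM heA
      (fun f hfM hfA => hbest i f ((hmem f).2 ⟨hfM, hfA⟩)) fun j hj => ?_) ?_
    · exact (bid_mono (hb j).1.le ((hnonneg j _ (h.sub j)).trans hj.le)
        (hbest j _ (hbestmem i))).trans (himax j (by simpa using hj))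
    · have : M \ univ.biUnion (Function.update A i (insert (best i) (A i))) =
          (M \ univ.biUnion A).erase (best i) := by
        have hU : univ.biUnion (Function.update A i (insert (best i) (A i))) =
            insert (best i) (univ.biUnion A) := by
          ext f
          simp only [mem_biUnion, mem_univ, true_and, mem_insert]
          constructor
          · rintro ⟨j, hj⟩
            by_cases hji : j = i
            · subst hji
              simp only [Function.update_self, mem_insert] at hj
              exact hj.imp id fun hj => ⟨j, hj⟩
            · rw [Function.update_of_ne hji] at hj
              exact Or.inr ⟨j, hj⟩
          · rintro (rfl | ⟨j, hj⟩)
            · exact ⟨i, by simp⟩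
            · refine ⟨j, ?_⟩
              by_cases hji : j = i
              · subst hji
                simp [hj]
              · rwa [Function.update_of_ne hji]
        rw [hU, sdiff_insert]
      rw [this, card_erase_of_mem (hbestmem i), hk, Nat.add_sub_cancel]

theorem submodular_arbitrary_entitlements_APS
    {ι : Type*} [DecidableEq ι] (M : Finset ι) (n : ℕ)
    (v : Fin n → Finset ι → ℝ) (b : Fin n → ℝ)
    (hb : ∀ i, 0 < b i ∧ b i ≤ 1) (hbsum : ∑ i, b i = 1)
    (hnorm : ∀ i, v i ∅ = 0)
    (hnonneg : ∀ i, ∀ S ⊆ M, 0 ≤ v i S)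
    (hmono : ∀ i, ∀ S T : Finset ι, S ⊆ T → T ⊆ M → v i S ≤ v i T)
    (hsubmod : ∀ i, ∀ S T : Finset ι, S ⊆ M → T ⊆ M →
      v i (S ∪ T) + v i (S ∩ T) ≤ v i S + v i T) :
    ∃ A : Fin n → Finset ι,
      (∀ i, A i ⊆ M) ∧
      (∀ i j, i ≠ j → Disjoint (A i) (A j)) ∧
      (∀ i, (1 / (3 - 2 * b i)) * APS (b i) (v i) M ≤ v i (A i)) := by
  obtain ⟨A, p, h, hA⟩ := GameInv.exists_satisfied (M := M) (v := v) (b := b)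
    (r := fun i => (1 / (3 - 2 * b i)) * APS (b i) (v i) M) hb hbsum hnorm hnonneg hmono hsubmod
    (fun i => by
      have : 3 - 2 * b i ≠ 0 := by linarith [(hb i).2]
      field_simp)
    _ _ _ (GameInv.start (fun i => (hb i).1) hnorm) rfl
  exact ⟨A, h.sub, h.disj, hA⟩
end

section
/- Let M be a finite set of items and let n ≥ 1 agents with equal entitlements have normalized monotone submodular valuations v_1, …, v_n : 2^M → ℝ≥0. Then there exists an allocation (A_1, …, A_n) of pairwise disjoint subsets of M such that for every agent i, v_i(A_i) ≥ (n/(3n − 2)) · MMS_n(v_i, M). -/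
/-!
Write `ρ = n / (3n - 2)` and rescale so that every agent with positive maximin share has share `1`;
the other agents are satisfied by any bundle.

* If some agent values a single item at `ρ` or more, she takes that item and leaves. Each remaining
  agent still has a family of disjoint bundles of value at least `1`, one per remaining agent (the
  bundle hit by the item is discarded), so induction on the number of agents applies.
* Otherwise take disjoint bundles `A j` maximizing the welfare `∑ j, min (w j (A j)) (2ρ)`, and
  suppose that `w a (A a) < ρ` for some agent `a` among the `k ≤ n` agents. Moving an item `x` to `a`
  cannot increase the welfare, and since `w a {x} < ρ` the cap `2ρ` does not affect `a`, so the
  marginal value of `x` to `a` is at most the total loss of the others. Summed over all items, the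
  marginal values to `a` amount to at least `k (1 - w a (A a)) > k (1 - ρ)` by submodularity applied
  to each of her `k` reference bundles (`IsSubmodVal.union_sub_le`), while the losses amount to at
  most `(k - 1) · 2ρ`, since the capped valuations are again submodular (`IsSubmodVal.cap`,
  `IsSubmodVal.sum_erase_le`). Hence `k < (3k - 2) ρ`, contradicting `k ≤ n`.
-/

open Finset

/-- The maximin share of an agent with valuation `v` among `n` agents with equal
entitlements, on the set `M` of items: the supremum over all partitions of `M`
into `n` pairwise disjoint bundles of the minimum value of a bundle. -/
noncomputable def MMS {ι : Type*} [DecidableEq ι] (n : ℕ) (v : Finset ι → ℝ)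
    (M : Finset ι) : ℝ :=
  sSup {z : ℝ | ∃ B : Fin n → Finset ι,
    (∀ i j, i ≠ j → Disjoint (B i) (B j)) ∧
    (Finset.univ.biUnion B = M) ∧
    z = ⨅ i, v (B i)}

/-- Normalized monotone submodular valuations, defined on all finite sets of items. -/
structure IsSubmodVal {ι : Type*} [DecidableEq ι] (w : Finset ι → ℝ) : Prop where
  empty : w ∅ = 0
  mono : ∀ S T : Finset ι, S ⊆ T → w S ≤ w T
  submod : ∀ S T : Finset ι, w (S ∪ T) + w (S ∩ T) ≤ w S + w T

namespace IsSubmodVal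

variable {ι : Type*} [DecidableEq ι] {w : Finset ι → ℝ}

lemma nonneg (h : IsSubmodVal w) (S : Finset ι) : 0 ≤ w S := by
  rw [← h.empty]
  exact h.mono _ _ (empty_subset _)

lemma insert_le (h : IsSubmodVal w) (x : ι) (S : Finset ι) :
    w (insert x S) ≤ w {x} + w S := by
  have h1 := h.submod {x} S
  have h2 := h.nonneg ({x} ∩ S)
  rw [← insert_eq] at h1
  linarith

/-- Capping a monotone submodular valuation at a constant preserves submodularity. -/
lemma cap (h : IsSubmodVal w) {c : ℝ} (hc : 0 ≤ c) :
    IsSubmodVal (fun S => min (w S) c) where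
  empty := by simp [h.empty, hc]
  mono S T hST := min_le_min_right _ (h.mono S T hST)
  submod S T := by
    have h0 := h.submod S T
    have h1 := h.mono S (S ∪ T) subset_union_left
    have h2 := h.mono T (S ∪ T) subset_union_right
    have h3 := h.mono (S ∩ T) S inter_subset_left
    have h4 := h.mono (S ∩ T) T inter_subset_right
    simp only [min_def]
    split_ifs <;> linarith

lemma union_sub_le (h : IsSubmodVal w) (A B : Finset ι) :
    w (A ∪ B) - w A ≤ ∑ x ∈ B, (w (insert x A) - w A) := by
  induction B using Finset.induction_on with
  | empty => simp
  | insert y B hy ih =>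
    rw [sum_insert hy]
    have h1 := h.submod (A ∪ B) (insert y A)
    have h2 := h.mono A ((A ∪ B) ∩ insert y A)
      (subset_inter subset_union_left (subset_insert _ _))
    have h3 : A ∪ B ∪ insert y A = A ∪ insert y B := by ext; simp; tauto
    rw [h3] at h1
    linarith

lemma sum_erase_le (h : IsSubmodVal w) (A : Finset ι) :
    ∑ x ∈ A, (w A - w (A.erase x)) ≤ w A := by
  induction A using Finset.induction_on with
  | empty => simp [h.empty]
  | insert y A hy ih =>
    rw [sum_insert hy, erase_insert hy]
    have h1 : ∑ x ∈ A, (w (insert y A) - w ((insert y A).erase x))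
        ≤ ∑ x ∈ A, (w A - w (A.erase x)) := by
      refine sum_le_sum fun x hx => ?_
      have hxy : y ≠ x := by rintro rfl; exact hy hx
      have h2 := h.submod A ((insert y A).erase x)
      have h3 : A ∪ (insert y A).erase x = insert y A := by
        ext z; simp only [mem_union, mem_erase, mem_insert]; grind
      have h4 : A ∩ (insert y A).erase x = A.erase x := by
        ext z; simp only [mem_inter, mem_erase, mem_insert]; grind
      rw [h3, h4] at h2
      linarith
    linarith

/-- Items outside `A` contribute nothing, so the sum may run over any set `S` of items. -/
lemma sum_erase_le' (h : IsSubmodVal w) (A S : Finset ι) :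
    ∑ x ∈ S, (w A - w (A.erase x)) ≤ w A := by
  refine le_trans ?_ (h.sum_erase_le A)
  calc ∑ x ∈ S, (w A - w (A.erase x)) ≤ ∑ x ∈ S ∪ A, (w A - w (A.erase x)) :=
        sum_le_sum_of_subset_of_nonneg subset_union_left fun x _ _ =>
          sub_nonneg.2 (h.mono _ _ (erase_subset _ _))
    _ = ∑ x ∈ A, (w A - w (A.erase x)) := by
        symm
        refine sum_subset subset_union_right fun x _ hx => ?_
        rw [erase_eq_of_notMem hx, sub_self]

/-- Restricting to the items in `M` and rescaling turns a valuation on `2^M` into a global one. -/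
lemma restrict {v : Finset ι → ℝ} {M : Finset ι} {c : ℝ} (hc : 0 ≤ c) (hnorm : v ∅ = 0)
    (hmono : ∀ S T : Finset ι, S ⊆ T → T ⊆ M → v S ≤ v T)
    (hsubmod : ∀ S T : Finset ι, S ⊆ M → T ⊆ M → v (S ∪ T) + v (S ∩ T) ≤ v S + v T) :
    IsSubmodVal (fun S => v (S ∩ M) / c) where
  empty := by simp [hnorm]
  mono S T hST := div_le_div_of_nonneg_right
    (hmono _ _ (inter_subset_inter_right hST) inter_subset_right) hc
  submod S T := by
    have h := hsubmod (S ∩ M) (T ∩ M) inter_subset_right inter_subset_right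
    rw [← union_inter_distrib_right, ← inter_inter_distrib_right] at h
    rw [← add_div, ← add_div]
    exact div_le_div_of_nonneg_right h hc

end IsSubmodVal

/-- The case in which every agent values every single item below `ρ`: a welfare maximizer for the
valuations capped at `2ρ` gives every agent at least `ρ`. -/
lemma exists_alloc_of_small {ι κ : Type*} [DecidableEq ι] [DecidableEq κ] [Fintype κ]
    (w : κ → Finset ι → ℝ) (hw : ∀ i, IsSubmodVal (w i)) {ρ : ℝ} (hρ : 0 ≤ ρ)
    (N : Finset κ) (S : Finset ι) (hk : ρ * (3 * (#N : ℝ) - 2) ≤ #N)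
    (hB : ∀ i ∈ N, ∃ B : κ → Finset ι, (∀ j ∈ N, B j ⊆ S) ∧
      (∀ j ∈ N, ∀ l ∈ N, j ≠ l → Disjoint (B j) (B l)) ∧ ∀ j ∈ N, 1 ≤ w i (B j))
    (hsmall : ∀ i ∈ N, ∀ x ∈ S, w i {x} < ρ) :
    ∃ A : κ → Finset ι, (∀ i, A i ⊆ S) ∧ (∀ i j, i ≠ j → Disjoint (A i) (A j)) ∧
      ∀ i ∈ N, ρ ≤ w i (A i) := by
  classical
  set t : κ → Finset ι → ℝ := fun i T => min (w i T) (2 * ρ) with ht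
  have htv : ∀ i, IsSubmodVal (t i) := fun i => (hw i).cap (by linarith)
  set F : Finset (κ → Finset ι) := (Fintype.piFinset fun _ : κ => S.powerset).filter
    fun A => ∀ i j, i ≠ j → Disjoint (A i) (A j) with hF
  have hmem : ∀ A, A ∈ F ↔ (∀ i, A i ⊆ S) ∧ ∀ i j, i ≠ j → Disjoint (A i) (A j) := by
    intro A
    simp [hF]
  have hne : F.Nonempty := ⟨fun _ => ∅, by rw [hmem]; simp⟩
  obtain ⟨A, hAF, hmax⟩ := F.exists_max_image (fun A => ∑ i ∈ N, t i (A i)) hne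
  obtain ⟨hAS, hAd⟩ := (hmem A).1 hAF
  refine ⟨A, hAS, hAd, fun a ha => ?_⟩
  by_contra! hlt
  have hmove : ∀ x ∈ S, w a (insert x (A a)) - w a (A a)
      ≤ ∑ j ∈ N.erase a, (t j (A j) - t j ((A j).erase x)) := by
    intro x hx
    have hA' : (fun j => if j = a then insert x (A a) else (A j).erase x) ∈ F := by
      rw [hmem]
      constructor
      · intro i
        split_ifs
        · exact insert_subset hx (hAS a)
        · exact (erase_subset _ _).trans (hAS i)
      · intro i j hij
        have hd := hAd i j hij
        rw [Finset.disjoint_left] at hd ⊢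
        intro y
        split_ifs <;> grind
    have h1 := hmax _ hA'
    rw [← add_sum_erase _ _ ha, ← add_sum_erase _ (fun i => t i (A i)) ha] at h1
    rw [if_pos rfl] at h1
    have h2 : ∑ j ∈ N.erase a, t j (if j = a then insert x (A a) else (A j).erase x)
        = ∑ j ∈ N.erase a, t j ((A j).erase x) :=
      sum_congr rfl fun j hj => by rw [if_neg (ne_of_mem_erase hj)]
    rw [h2] at h1
    have h3 : t a (insert x (A a)) = w a (insert x (A a)) := by
      have := (hw a).insert_le x (A a)
      have := hsmall a ha x hx
      exact min_eq_left (by linarith)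
    have h4 : t a (A a) = w a (A a) := min_eq_left (by linarith)
    rw [h3, h4] at h1
    rw [sum_sub_distrib]
    linarith
  have hloss : ∑ x ∈ S, ∑ j ∈ N.erase a, (t j (A j) - t j ((A j).erase x))
      ≤ ((#N : ℝ) - 1) * (2 * ρ) := by
    rw [sum_comm]
    calc _ ≤ ∑ j ∈ N.erase a, 2 * ρ :=
          sum_le_sum fun j _ => ((htv j).sum_erase_le' (A j) S).trans (min_le_right _ _)
      _ = _ := by
          rw [sum_const, nsmul_eq_mul, card_erase_of_mem ha,
            Nat.cast_sub (card_pos.2 ⟨a, ha⟩), Nat.cast_one]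
  obtain ⟨B, hBS, hBd, hB1⟩ := hB a ha
  have hgain : (#N : ℝ) * (1 - w a (A a)) ≤ ∑ x ∈ S, (w a (insert x (A a)) - w a (A a)) := by
    calc (#N : ℝ) * (1 - w a (A a)) = ∑ k ∈ N, (1 - w a (A a)) := by
          rw [sum_const, nsmul_eq_mul]
      _ ≤ ∑ k ∈ N, ∑ x ∈ B k, (w a (insert x (A a)) - w a (A a)) := by
          refine sum_le_sum fun k hk => ?_
          have h1 := (hw a).union_sub_le (A a) (B k)
          have h2 := (hw a).mono (B k) (A a ∪ B k) subset_union_right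
          have h3 := hB1 k hk
          linarith
      _ = ∑ x ∈ N.biUnion B, (w a (insert x (A a)) - w a (A a)) :=
          (sum_biUnion fun j hj l hl hjl => hBd j hj l hl hjl).symm
      _ ≤ _ := sum_le_sum_of_subset_of_nonneg (biUnion_subset.2 hBS) fun x _ _ =>
          sub_nonneg.2 ((hw a).mono _ _ (subset_insert _ _))
  have htot := sum_le_sum hmove
  have hNpos : (0 : ℝ) < #N := by exact_mod_cast card_pos.2 ⟨a, ha⟩
  have hstrict := mul_lt_mul_of_pos_left hlt hNpos
  linarith

/-- Agents in `N` can all be given value `ρ` as soon as each of them has `#N` disjoint bundles of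
value at least `1` (indexed by the agents themselves) and `ρ ≤ k / (3k - 2)` for all
`1 ≤ k ≤ #N`. -/
lemma exists_alloc {ι κ : Type*} [DecidableEq ι] [DecidableEq κ] [Fintype κ]
    (w : κ → Finset ι → ℝ) (hw : ∀ i, IsSubmodVal (w i)) {ρ : ℝ} (hρ : 0 ≤ ρ) (m : ℕ)
    (N : Finset κ) (hm : #N = m) (S : Finset ι)
    (hk : ∀ k : ℕ, 1 ≤ k → k ≤ m → ρ * (3 * (k : ℝ) - 2) ≤ k)
    (hB : ∀ i ∈ N, ∃ B : κ → Finset ι, (∀ j ∈ N, B j ⊆ S) ∧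
      (∀ j ∈ N, ∀ l ∈ N, j ≠ l → Disjoint (B j) (B l)) ∧ ∀ j ∈ N, 1 ≤ w i (B j)) :
    ∃ A : κ → Finset ι, (∀ i, A i ⊆ S) ∧ (∀ i j, i ≠ j → Disjoint (A i) (A j)) ∧
      ∀ i ∈ N, ρ ≤ w i (A i) := by
  induction m generalizing N S with
  | zero =>
    rw [card_eq_zero] at hm
    subst hm
    exact ⟨fun _ => ∅, by simp, by simp, by simp⟩
  | succ m ih =>
    by_cases hsmall : ∀ i ∈ N, ∀ x ∈ S, w i {x} < ρ
    · refine exists_alloc_of_small w hw hρ N S ?_ hB hsmall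
      rw [hm]
      exact hk _ (by omega) le_rfl
    push Not at hsmall
    obtain ⟨a, ha, x, hx, hax⟩ := hsmall
    obtain ⟨A, hAS, hAd, hA⟩ := ih (N.erase a) (by rw [card_erase_of_mem ha, hm]; rfl)
      (S.erase x) (fun k h1 h2 => hk k h1 (by omega)) (by
        intro i hi
        obtain ⟨B, hBS, hBd, hB1⟩ := hB i (mem_of_mem_erase hi)
        by_cases hxB : ∃ j ∈ N, x ∈ B j
        -- Relabel the bundles so that the one containing `x` belongs to the departing agent `a`.
        · obtain ⟨j, hj, hxj⟩ := hxB
          have hsw : ∀ l ∈ N.erase a, Equiv.swap a j l ∈ N ∧ Equiv.swap a j l ≠ j := by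
            intro l hl
            rw [mem_erase] at hl
            refine ⟨?_, fun h => hl.1 ?_⟩
            · rw [Equiv.swap_apply_def]
              split_ifs <;> tauto
            · exact (Equiv.swap a j).injective (h.trans (Equiv.swap_apply_left a j).symm)
          refine ⟨fun l => B (Equiv.swap a j l), ?_, ?_, ?_⟩
          · intro l hl
            refine subset_erase.2 ⟨hBS _ (hsw l hl).1, fun hxl => ?_⟩
            exact Finset.disjoint_left.1 (hBd _ (hsw l hl).1 j hj (hsw l hl).2) hxl hxj
          · intro l hl l' hl' hne
            exact hBd _ (hsw l hl).1 _ (hsw l' hl').1 ((Equiv.swap a j).injective.ne hne)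
          · intro l hl
            exact hB1 _ (hsw l hl).1
        · push Not at hxB
          exact ⟨B, fun l hl => subset_erase.2
              ⟨hBS l (mem_of_mem_erase hl), hxB l (mem_of_mem_erase hl)⟩,
            fun l hl l' hl' => hBd l (mem_of_mem_erase hl) l' (mem_of_mem_erase hl'),
            fun l hl => hB1 l (mem_of_mem_erase hl)⟩)
    refine ⟨fun i => if i = a then {x} else A i, ?_, ?_, ?_⟩
    · intro i
      dsimp only
      split_ifs
      · exact singleton_subset_iff.2 hx
      · exact (hAS i).trans (erase_subset _ _)
    · have hxA : ∀ i, x ∉ A i := fun i h => notMem_erase x S (hAS i h)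
      intro i j hij
      dsimp only
      split_ifs with h1 h2 h2
      · exact absurd (h1.trans h2.symm) hij
      · exact disjoint_singleton_left.2 (hxA j)
      · exact disjoint_singleton_right.2 (hxA i)
      · exact hAd i j hij
    · intro i hi
      dsimp only
      split_ifs with h1
      · rw [h1]
        exact hax
      · exact hA i (mem_erase.2 ⟨h1, hi⟩)

/-- The supremum defining the maximin share is attained: only finitely many partitions exist. -/
lemma exists_partition_MMS {ι : Type*} [DecidableEq ι] {n : ℕ} (hn : 1 ≤ n)
    (v : Finset ι → ℝ) (M : Finset ι) :
    ∃ B : Fin n → Finset ι, (∀ j, B j ⊆ M) ∧ (∀ i j, i ≠ j → Disjoint (B i) (B j)) ∧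
      ∀ j, MMS n v M ≤ v (B j) := by
  set Z : Set ℝ := {z : ℝ | ∃ B : Fin n → Finset ι,
    (∀ i j, i ≠ j → Disjoint (B i) (B j)) ∧ (Finset.univ.biUnion B = M) ∧
    z = ⨅ i, v (B i)} with hZ
  have hfin : Z.Finite := by
    refine ((Fintype.piFinset fun _ : Fin n => M.powerset).finite_toSet.image
      fun B => ⨅ i, v (B i)).subset ?_
    rintro z ⟨B, -, hBM, rfl⟩
    refine ⟨B, ?_, rfl⟩
    simp only [mem_coe, Fintype.mem_piFinset, mem_powerset]
    intro i
    rw [← hBM]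
    exact subset_biUnion_of_mem B (mem_univ i)
  have hne : Z.Nonempty := by
    refine ⟨_, fun i => if i = ⟨0, hn⟩ then M else ∅, ?_, ?_, rfl⟩
    · intro i j hij
      dsimp only
      split_ifs with h1 h2
      · exact absurd (h1.trans h2.symm) hij
      all_goals simp
    · ext x
      simp only [mem_biUnion, mem_univ, true_and]
      exact ⟨fun ⟨i, hi⟩ => by split_ifs at hi <;> simp_all, fun hx => ⟨⟨0, hn⟩, by simpa using hx⟩⟩
  obtain ⟨B, hBd, hBM, hz⟩ := hne.csSup_mem hfin
  refine ⟨B, fun j => ?_, hBd, fun j => ?_⟩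
  · rw [← hBM]
    exact subset_biUnion_of_mem B (mem_univ j)
  · change sSup Z ≤ _
    rw [hz]
    exact ciInf_le (Set.finite_range _).bddBelow j

theorem submodular_equal_entitlements_MMS_n_div_3n_sub_2
    {ι : Type*} [DecidableEq ι] (M : Finset ι) (n : ℕ) (hn : 1 ≤ n)
    (v : Fin n → Finset ι → ℝ)
    (hnorm : ∀ i, v i ∅ = 0)
    (hnonneg : ∀ i, ∀ S ⊆ M, 0 ≤ v i S)
    (hmono : ∀ i, ∀ S T : Finset ι, S ⊆ T → T ⊆ M → v i S ≤ v i T)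
    (hsubmod : ∀ i, ∀ S T : Finset ι, S ⊆ M → T ⊆ M →
      v i (S ∪ T) + v i (S ∩ T) ≤ v i S + v i T) :
    ∃ A : Fin n → Finset ι,
      (∀ i, A i ⊆ M) ∧
      (∀ i j, i ≠ j → Disjoint (A i) (A j)) ∧
      (∀ i, ((n : ℝ) / (3 * (n : ℝ) - 2)) * MMS n (v i) M ≤ v i (A i)) := by
  classical
  have hn' : (1 : ℝ) ≤ n := by exact_mod_cast hn
  have hden : (0 : ℝ) < 3 * (n : ℝ) - 2 := by linarith
  have hρ : 0 ≤ (n : ℝ) / (3 * (n : ℝ) - 2) := by positivity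
  -- The absolute value only serves to make every rescaled function a valuation; it is harmless for
  -- the agents in `N`, whose share is positive.
  set w : Fin n → Finset ι → ℝ := fun i S => v i (S ∩ M) / |MMS n (v i) M| with hwdef
  have hw : ∀ i, IsSubmodVal (w i) := fun i =>
    IsSubmodVal.restrict (abs_nonneg _) (hnorm i) (hmono i) (hsubmod i)
  set N : Finset (Fin n) := univ.filter fun i => 0 < MMS n (v i) M with hN
  have hNn : #N ≤ n := (card_le_univ N).trans_eq (Fintype.card_fin n)
  obtain ⟨A, hAM, hAd, hA⟩ := exists_alloc w hw hρ #N N rfl M (by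
    intro k hk1 hkN
    have h1 : (1 : ℝ) ≤ k := by exact_mod_cast hk1
    have h2 : (k : ℝ) ≤ n := by exact_mod_cast hkN.trans hNn
    rw [div_mul_eq_mul_div, div_le_iff₀ hden]
    nlinarith) (by
    intro i hi
    have hpos : 0 < MMS n (v i) M := by simpa [hN] using hi
    obtain ⟨B, hBM, hBd, hB⟩ := exists_partition_MMS hn (v i) M
    refine ⟨B, fun j _ => hBM j, fun j _ l _ h => hBd j l h, fun j _ => ?_⟩
    simp only [hwdef]
    rw [inter_eq_left.2 (hBM j), abs_of_pos hpos, one_le_div hpos]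
    exact hB j)
  refine ⟨A, hAM, hAd, fun i => ?_⟩
  by_cases hpos : 0 < MMS n (v i) M
  · have h := hA i (by simpa [hN] using hpos)
    simp only [hwdef] at h
    rwa [inter_eq_left.2 (hAM i), abs_of_pos hpos, le_div_iff₀ hpos] at h
  · exact (mul_nonpos_of_nonneg_of_nonpos hρ (not_lt.1 hpos)).trans (hnonneg i _ (hAM i))
end

section
/- Let M be a finite set of items and let n ≥ 1 agents with equal entitlements have normalized monotone submodular valuations v_1, …, v_n : 2^M → ℝ≥0. Then there exists an allocation (A_1, …, A_n) of pairwise disjoint subsets of M such that for every agent i, v_i(A_i) ≥ (10/27) · MMS_n(v_i, M). -/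
/-!
The allocation is produced by a bidding game. Rescale each agent with positive maximin share so
that the share is `27` and the target is `10`, and give every agent a budget of `14`. In each round
every agent computes the largest marginal value `x` of a remaining item with respect to her current
bundle and places a bid depending on `x`, on the value `S` of her bundle and on the amount `w` spent
so far; the highest bidder takes her favourite item and pays her bid. The bid (`bid`) is `0` once
`S ≥ 10`, the whole remaining budget if `S + x ≥ 10`, and otherwise essentially `x`, except that a
first item of value in `[7, 10)` is bid on with half the budget, and that the bid is `2 x` if
`S ≥ 28 / 3`.

Suppose an agent ends with `S < 10`. For a bundle `B` of her maximin partition, submodularity gives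
`27 ≤ S + ∑ x_b` over the items `b ∈ B` lost to others, where `x_b` was her maximal marginal value
when `b` was sold, so `∑ x_b > 17`. The price of each lost `b` is at least her bid at that time, and
it follows that the items of `B` lost to others cost at least `14` altogether (`good_sum`,
`crit_sum`). Summed over the `n` bundles the others spent at least `14 n`, which exceeds their
total budget `14 (n - 1)`.

The price bound comes from an invariant (`Inv`) of the game of a single agent. Normally a lost item
costs at least `min x_b 7`, and the full `14` if `x_b ≥ 10` (`Good`). Then two items with `x_b ≥ 7`
already cost `14`, one such item costs `7` and leaves a loss of more than `17 - 10 = 7`, and without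
such items the cost exceeds `17`. The only exception arises after winning exactly two items of total
value in `(28 / 3, 10)`, when the remaining budget may be smaller than `x`. In that case every lost
item with `x_b > 2 / 3` costs at least `4`, every other one at least `4` or `2 x_b`, and items with
`x_b ≥ 5` still satisfy the normal guarantee (`Crit`), which is again enough.
-/

open Finset

namespace BiddingGame

/-! ### Strategy and invariant of a single agent -/

/-- Bid of an agent with bundle value `S`, amount spent `w` and largest remaining marginal
value `x`; the target value is `10` and the budget `14`. -/
noncomputable def bid (S w x : ℝ) : ℝ :=
  if 10 ≤ S then 0 else if 10 ≤ S + x then 14 - w else if S < 28 / 3 then min x 7 else 2 * x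

/-- A lost item is recorded as the pair of the agent's maximal marginal value when the item was
sold, and the price paid for it. `Good` is the price guarantee outside of the critical phase. -/
def Good (y : ℝ × ℝ) : Prop := min y.1 7 ≤ y.2 ∧ (10 ≤ y.1 → 14 ≤ y.2)

/-- Price guarantee for the lost items of an agent that has reached the critical phase. -/
def Crit (y : ℝ × ℝ) : Prop :=
  (4 ≤ y.2 ∧ Good y) ∨ (4 ≤ y.2 ∧ y.1 < 5) ∨ (2 * y.1 ≤ y.2 ∧ y.1 ≤ 2 / 3)

/-- Invariant of a single agent: bundle value `S`, amount spent `w`, upper bound `x` on the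
marginal values of the remaining items, and set `L` of lost items. -/
inductive Inv (S w x : ℝ) (L : Set (ℝ × ℝ)) : Prop
  /-- The target is reached. -/
  | done (hS : 10 ≤ S) (hw : w ≤ 14)
  /-- Nothing has been won. -/
  | fresh (hS : S = 0) (hw : w = 0) (hL : ∀ y ∈ L, Good y ∧ x ≤ y.1)
  /-- One item of value less than `7` has been won. -/
  | one (hS : S < 7) (hw : w = S) (hx : x ≤ S) (hL : ∀ y ∈ L, Good y ∧ x ≤ y.1)
  /-- Two items have been won, the first one of value less than `7`. -/
  | two (hS : S < 10) (hw : w = S) (hx : 2 * x ≤ S) (hL : ∀ y ∈ L, Good y ∧ x ≤ y.1)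
  /-- One item of value at least `7` has been won. -/
  | large (hS : 7 ≤ S) (hS' : S < 10) (hw : w = 7) (hx : x ≤ S) (hL : ∀ y ∈ L, Good y)
  /-- Marginal values are so small that the remaining budget never restricts the bid. -/
  | late (hS : S < 10) (hw : w ≤ max S (2 * S - 28 / 3)) (hx : 3 * x ≤ 10) (hL : ∀ y ∈ L, Good y)
  /-- With two items won, an item has been lost for less than its marginal value. -/
  | crit (hS : 28 / 3 < S) (hS' : S < 10) (hw : w = S) (hx : x < 5) (hL : ∀ y ∈ L, Crit y)
  /-- Further items have been won after the critical loss. -/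
  | critLate (hS : 28 / 3 < S) (hS' : S < 10) (hw : w ≤ 2 * S - 28 / 3) (hx : 3 * x ≤ 2)
      (hL : ∀ y ∈ L, Crit y)

lemma Inv.mono {S w x x' : ℝ} {L L' : Set (ℝ × ℝ)} (h : Inv S w x L) (hx' : x' ≤ x)
    (hL' : L' ⊆ L) : Inv S w x' L' := by
  cases h with
  | done hS hw => exact .done hS hw
  | fresh hS hw hL =>
    exact .fresh hS hw fun y hy => ⟨(hL y (hL' hy)).1, hx'.trans (hL y (hL' hy)).2⟩
  | one hS hw hx hL =>
    exact .one hS hw (by linarith) fun y hy => ⟨(hL y (hL' hy)).1, hx'.trans (hL y (hL' hy)).2⟩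
  | two hS hw hx hL =>
    exact .two hS hw (by linarith) fun y hy => ⟨(hL y (hL' hy)).1, hx'.trans (hL y (hL' hy)).2⟩
  | large hS hS' hw hx hL => exact .large hS hS' hw (by linarith) fun y hy => hL y (hL' hy)
  | late hS hw hx hL => exact .late hS hw (by linarith) fun y hy => hL y (hL' hy)
  | crit hS hS' hw hx hL => exact .crit hS hS' hw (by linarith) fun y hy => hL y (hL' hy)
  | critLate hS hS' hw hx hL => exact .critLate hS hS' hw (by linarith) fun y hy => hL y (hL' hy)

lemma Inv.spent_le {S w x : ℝ} {L : Set (ℝ × ℝ)} (h : Inv S w x L) : w ≤ 14 := by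
  cases h with
  | late hS hw => exact hw.trans (max_le (by linarith) (by linarith))
  | _ => linarith

lemma Inv.bid_nonneg {S w x : ℝ} {L : Set (ℝ × ℝ)} (h : Inv S w x L) (hx : 0 ≤ x) :
    0 ≤ bid S w x := by
  have := h.spent_le
  unfold bid
  split_ifs
  · exact le_rfl
  · linarith
  · exact le_min hx (by norm_num)
  · linarith

lemma Inv.win {S w x : ℝ} {L : Set (ℝ × ℝ)} (h : Inv S w x L) (h0 : 0 ≤ x) :
    Inv (S + x) (w + bid S w x) x L := by
  by_cases hS10 : 10 ≤ S
  · have := h.spent_le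
    refine .done (by linarith) ?_
    simp [bid, hS10, this]
  by_cases hSx : 10 ≤ S + x
  · refine .done hSx ?_
    simp [bid, hS10, hSx]
  have hb : bid S w x = if S < 28 / 3 then min x 7 else 2 * x := by simp [bid, hS10, hSx]
  push Not at hS10 hSx
  cases h with
  | done hS hw => linarith
  | fresh hS hw hL =>
    have hb' : bid S w x = min x 7 := by rw [hb, if_pos (by linarith)]
    rcases lt_or_ge x 7 with h7 | h7
    · rw [min_eq_left h7.le] at hb'
      exact .one (by linarith) (by linarith) (by linarith) hL
    · rw [min_eq_right h7] at hb'
      exact .large (by linarith) hSx (by linarith) (by linarith) fun y hy => (hL y hy).1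
  | one hS hw hx hL =>
    rw [if_pos (by linarith), min_eq_left (by linarith)] at hb
    exact .two hSx (by linarith) (by linarith) hL
  | two hS hw hx hL =>
    split_ifs at hb with hc
    · rw [min_eq_left (by linarith)] at hb
      exact .late hSx (le_max_of_le_left (by linarith)) (by linarith) fun y hy => (hL y hy).1
    · exact .late hSx (le_max_of_le_right (by linarith)) (by linarith) fun y hy => (hL y hy).1
  | large hS hS' hw hx hL =>
    split_ifs at hb with hc
    · rw [min_eq_left (by linarith)] at hb
      exact .late hSx (le_max_of_le_left (by linarith)) (by linarith) hL
    · exact .late hSx (le_max_of_le_right (by linarith)) (by linarith) hL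
  | late hS hw hx hL =>
    split_ifs at hb with hc
    · rw [min_eq_left (by linarith)] at hb
      rw [max_eq_left (by linarith)] at hw
      exact .late hSx (le_max_of_le_left (by linarith)) hx hL
    · rw [max_eq_right (by linarith)] at hw
      exact .late hSx (le_max_of_le_right (by linarith)) hx hL
  | crit hS hS' hw hx hL =>
    rw [if_neg (by linarith)] at hb
    exact .critLate (by linarith) hSx (by linarith) (by linarith) hL
  | critLate hS hS' hw hx hL =>
    rw [if_neg (by linarith)] at hb
    exact .critLate (by linarith) hSx (by linarith) hx hL

/-- The interesting case is `Inv.two`: if the remaining budget `14 - S` is below `x`, then `x > 4`,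
so all items lost so far were sold for at least `4`, and the agent enters the critical phase. -/
lemma Inv.lose {S w x p : ℝ} {L : Set (ℝ × ℝ)} (h : Inv S w x L) (h0 : 0 ≤ x)
    (hp : bid S w x ≤ p) : Inv S w x (insert (x, p) L) := by
  by_cases hS10 : 10 ≤ S
  · exact .done hS10 h.spent_le
  have hb : bid S w x = if 10 ≤ S + x then 14 - w else if S < 28 / 3 then min x 7 else 2 * x := by
    simp [bid, hS10]
  push Not at hS10
  rw [hb] at hp
  -- below the threshold the bid is at least `min x 7`
  have hlow : ¬ 10 ≤ S + x → min x 7 ≤ p := by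
    intro hSx
    rw [if_neg hSx] at hp
    split_ifs at hp
    · exact hp
    · exact (min_le_left _ _).trans (by linarith)
  cases h with
  | done hS hw => linarith
  | fresh hS hw hL =>
    refine .fresh hS hw ?_
    rintro y (rfl | hy)
    · refine ⟨?_, le_rfl⟩
      by_cases hSx : 10 ≤ S + x
      · rw [if_pos hSx] at hp
        exact ⟨(min_le_right _ _).trans (by linarith), fun _ => by linarith⟩
      · exact ⟨hlow hSx, fun h => absurd (by simpa [hS] using h) hSx⟩
    · exact hL y hy
  | one hS hw hx hL =>
    refine .one hS hw hx ?_
    rintro y (rfl | hy)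
    · refine ⟨⟨?_, fun h => ?_⟩, le_rfl⟩
      · by_cases hSx : 10 ≤ S + x
        · rw [if_pos hSx] at hp
          exact (min_le_right _ _).trans (by linarith)
        · exact hlow hSx
      · dsimp only at h
        linarith
    · exact hL y hy
  | two hS hw hx hL =>
    by_cases hgood : min x 7 ≤ p
    · refine .two hS hw hx ?_
      rintro y (rfl | hy)
      · refine ⟨⟨hgood, fun h => ?_⟩, le_rfl⟩
        dsimp only at h
        linarith
      · exact hL y hy
    · have hSx : 10 ≤ S + x := by
        by_contra hc
        exact hgood (hlow hc)
      rw [if_pos hSx] at hp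
      have hpx : p < x := by
        by_contra hc
        exact hgood ((min_le_left _ _).trans (not_lt.1 hc))
      refine .crit (by linarith) hS hw (by linarith) ?_
      rintro y (rfl | hy)
      · exact .inr (.inl ⟨by dsimp only; linarith, by dsimp only; linarith⟩)
      · obtain ⟨hg, hy1⟩ := hL y hy
        exact .inl ⟨(le_min (by linarith) (by norm_num)).trans hg.1, hg⟩
  | large hS hS' hw hx hL =>
    refine .large hS hS' hw hx ?_
    rintro y (rfl | hy)
    · refine ⟨?_, fun h => ?_⟩
      · by_cases hSx : 10 ≤ S + x
        · rw [if_pos hSx] at hp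
          exact (min_le_right _ _).trans (by dsimp only; linarith)
        · exact hlow hSx
      · dsimp only at h
        linarith
    · exact hL y hy
  | late hS hw hx hL =>
    refine .late hS hw hx ?_
    have hw' : w ≤ 32 / 3 := hw.trans (max_le (by linarith) (by linarith))
    rintro y (rfl | hy)
    · refine ⟨?_, fun h => ?_⟩
      · by_cases hSx : 10 ≤ S + x
        · rw [if_pos hSx] at hp
          exact (min_le_left _ _).trans (by dsimp only; linarith)
        · exact hlow hSx
      · dsimp only at h
        linarith
    · exact hL y hy
  | crit hS hS' hw hx hL =>
    refine .crit hS hS' hw hx ?_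
    rintro y (rfl | hy)
    · by_cases hSx : 10 ≤ S + x
      · rw [if_pos hSx] at hp
        exact .inr (.inl ⟨by dsimp only; linarith, hx⟩)
      · rw [if_neg hSx, if_neg (by linarith)] at hp
        exact .inr (.inr ⟨hp, by dsimp only; linarith⟩)
    · exact hL y hy
  | critLate hS hS' hw hx hL =>
    refine .critLate hS hS' hw hx ?_
    rintro y (rfl | hy)
    · refine .inr (.inr ⟨?_, by dsimp only; linarith⟩)
      by_cases hSx : 10 ≤ S + x
      · rw [if_pos hSx] at hp
        dsimp only
        linarith
      · rwa [if_neg hSx, if_neg (by linarith)] at hp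
    · exact hL y hy

/-! ### The cost of a bundle of lost items -/

lemma good_sum {ι : Type*} [DecidableEq ι] (P : Finset ι) (m q : ι → ℝ)
    (hq : ∀ b ∈ P, 0 ≤ q b) (hg : ∀ b ∈ P, Good (m b, q b)) (hm : 17 < ∑ b ∈ P, m b) :
    14 ≤ ∑ b ∈ P, q b := by
  by_cases h10 : ∃ b ∈ P, 10 ≤ m b
  · obtain ⟨b, hb, hb10⟩ := h10
    exact ((hg b hb).2 hb10).trans (Finset.single_le_sum hq hb)
  push Not at h10
  have hsmall : ∀ b ∈ P, m b < 7 → m b ≤ q b := fun b hb h => by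
    have := (hg b hb).1
    simpa [min_eq_left h.le] using this
  have hlarge : ∀ b ∈ P, 7 ≤ m b → 7 ≤ q b := fun b hb h => by
    have := (hg b hb).1
    simpa [min_eq_right h] using this
  by_cases h7 : ∃ b ∈ P, 7 ≤ m b
  · obtain ⟨b, hb, hb7⟩ := h7
    have e1 := Finset.add_sum_erase P m hb
    have e2 := Finset.add_sum_erase P q hb
    have := h10 b hb
    have hqb := hlarge b hb hb7
    by_cases h7' : ∃ c ∈ P.erase b, 7 ≤ m c
    · obtain ⟨c, hc, hc7⟩ := h7'
      have := hlarge c (Finset.mem_of_mem_erase hc) hc7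
      have := Finset.single_le_sum (fun d hd => hq d (Finset.mem_of_mem_erase hd)) hc
      linarith
    · push Not at h7'
      have := Finset.sum_le_sum fun d hd => hsmall d (Finset.mem_of_mem_erase hd) (h7' d hd)
      linarith
  · push Not at h7
    have := Finset.sum_le_sum fun d hd => hsmall d hd (h7 d hd)
    linarith

lemma crit_sum {ι : Type*} [DecidableEq ι] (P : Finset ι) (m q : ι → ℝ)
    (hq : ∀ b ∈ P, 0 ≤ q b) (hg : ∀ b ∈ P, Crit (m b, q b)) (hm : 17 < ∑ b ∈ P, m b) :
    14 ≤ ∑ b ∈ P, q b := by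
  have hcase : ∀ b ∈ P,
      (4 ≤ q b ∧ (Good (m b, q b) ∨ m b < 5)) ∨ (2 * m b ≤ q b ∧ m b ≤ 2 / 3) := by
    intro b hb
    rcases hg b hb with h | h | h
    · exact .inl ⟨h.1, .inl h.2⟩
    · exact .inl ⟨h.1, .inr h.2⟩
    · exact .inr h
  by_cases h10 : ∃ b ∈ P, 10 ≤ m b
  · obtain ⟨b, hb, hb10⟩ := h10
    refine le_trans ?_ (Finset.single_le_sum hq hb)
    rcases hcase b hb with ⟨-, h | h⟩ | h
    · exact h.2 hb10
    · linarith
    · linarith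
  push Not at h10
  have hlarge : ∀ b ∈ P, 7 ≤ m b → 7 ≤ q b := by
    intro b hb hb7
    rcases hcase b hb with ⟨-, h | h⟩ | h
    · simpa [min_eq_right hb7] using h.1
    · linarith
    · linarith
  have hmed : ∀ b ∈ P, m b < 7 → 4 ≤ q b → m b < 5 ∨ m b ≤ q b := by
    intro b hb hb7 hq4
    rcases hcase b hb with ⟨-, h | h⟩ | h
    · exact .inr (by simpa [min_eq_left hb7.le] using h.1)
    · exact .inl h
    · exact .inl (by linarith)
  have htiny : ∀ b ∈ P, ¬ 4 ≤ q b → 2 * m b ≤ q b := by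
    intro b hb hq4
    rcases hcase b hb with h | h
    · exact absurd h.1 hq4
    · exact h.1
  -- splitting a set of lost items into those sold for at least `4` and the others
  have hsplit : ∀ R ⊆ P, ∑ b ∈ R, m b = ∑ b ∈ R with 4 ≤ q b, m b + ∑ b ∈ R with ¬ 4 ≤ q b, m b ∧
      ∑ b ∈ R, q b = ∑ b ∈ R with 4 ≤ q b, q b + ∑ b ∈ R with ¬ 4 ≤ q b, q b ∧
      2 * ∑ b ∈ R with ¬ 4 ≤ q b, m b ≤ ∑ b ∈ R with ¬ 4 ≤ q b, q b ∧
      0 ≤ ∑ b ∈ R with ¬ 4 ≤ q b, q b ∧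
      4 * (#{b ∈ R | 4 ≤ q b} : ℝ) ≤ ∑ b ∈ R with 4 ≤ q b, q b := by
    intro R hR
    refine ⟨(Finset.sum_filter_add_sum_filter_not _ _ _).symm,
      (Finset.sum_filter_add_sum_filter_not _ _ _).symm, ?_, ?_, ?_⟩
    · rw [Finset.mul_sum]
      refine Finset.sum_le_sum fun b hb => ?_
      rw [Finset.mem_filter] at hb
      exact htiny b (hR hb.1) hb.2
    · exact Finset.sum_nonneg fun b hb => hq b (hR (Finset.mem_filter.1 hb).1)
    · have := Finset.card_nsmul_le_sum {b ∈ R | 4 ≤ q b} q 4 fun b hb => (Finset.mem_filter.1 hb).2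
      rw [nsmul_eq_mul] at this
      linarith
  by_cases h7 : ∃ b ∈ P, 7 ≤ m b
  · obtain ⟨b, hb, hb7⟩ := h7
    have e1 := Finset.add_sum_erase P m hb
    have e2 := Finset.add_sum_erase P q hb
    have := h10 b hb
    have hqb := hlarge b hb hb7
    by_cases h7' : ∃ c ∈ P.erase b, 7 ≤ m c
    · obtain ⟨c, hc, hc7⟩ := h7'
      have := hlarge c (Finset.mem_of_mem_erase hc) hc7
      have := Finset.single_le_sum (fun d hd => hq d (Finset.mem_of_mem_erase hd)) hc
      linarith
    · push Not at h7'
      obtain ⟨s1, s2, s3, s4, s5⟩ := hsplit _ (Finset.erase_subset b P)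
      rcases Nat.lt_or_ge 1 #{b ∈ P.erase b | 4 ≤ q b} with hk | hk
      · have : (2 : ℝ) ≤ #{b ∈ P.erase b | 4 ≤ q b} := by exact_mod_cast hk
        linarith
      rcases Finset.eq_empty_or_nonempty {b ∈ P.erase b | 4 ≤ q b} with hN | hN
      · rw [hN, Finset.sum_empty] at s1 s2
        linarith
      · obtain ⟨c, hc⟩ := Finset.card_eq_one.1 (le_antisymm hk hN.card_pos)
        have hcm : c ∈ P.erase b ∧ 4 ≤ q c := by
          have : c ∈ {b ∈ P.erase b | 4 ≤ q b} := hc ▸ Finset.mem_singleton_self c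
          exact Finset.mem_filter.1 this
        rw [hc, Finset.sum_singleton] at s1 s2
        have hc7 := h7' c hcm.1
        rcases hmed c (Finset.mem_of_mem_erase hcm.1) hc7 hcm.2 with h | h <;> linarith
  · push Not at h7
    obtain ⟨s1, s2, s3, s4, s5⟩ := hsplit P subset_rfl
    rcases Nat.lt_or_ge 3 #{b ∈ P | 4 ≤ q b} with hk | hk
    · have : (4 : ℝ) ≤ #{b ∈ P | 4 ≤ q b} := by exact_mod_cast hk
      linarith
    · have hk' : (#{b ∈ P | 4 ≤ q b} : ℝ) ≤ 3 := by exact_mod_cast hk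
      have : ∑ b ∈ P with 4 ≤ q b, m b - #{b ∈ P | 4 ≤ q b} ≤ ∑ b ∈ P with 4 ≤ q b, q b := by
        rw [Finset.card_eq_sum_ones, Nat.cast_sum, ← Finset.sum_sub_distrib]
        refine Finset.sum_le_sum fun b hb => ?_
        rw [Finset.mem_filter] at hb
        push_cast
        rcases hmed b hb.1 (h7 b hb.1) hb.2 with h | h <;> linarith
      linarith

/-- An agent that misses her target sees the items lost from a bundle of value `27` sold for at
least the whole budget of one agent. -/
lemma Inv.cost {ι : Type*} [DecidableEq ι] {S w x : ℝ} {L : Set (ℝ × ℝ)} (h : Inv S w x L)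
    (hS : S < 10) (P : Finset ι) (m q : ι → ℝ) (hq : ∀ b ∈ P, 0 ≤ q b)
    (hP : ∀ b ∈ P, (m b, q b) ∈ L) (hm : 27 ≤ S + ∑ b ∈ P, m b) : 14 ≤ ∑ b ∈ P, q b := by
  have hm' : 17 < ∑ b ∈ P, m b := by linarith
  cases h with
  | done hS => linarith
  | fresh _ _ hL => exact good_sum P m q hq (fun b hb => (hL _ (hP b hb)).1) hm'
  | one _ _ _ hL => exact good_sum P m q hq (fun b hb => (hL _ (hP b hb)).1) hm'
  | two _ _ _ hL => exact good_sum P m q hq (fun b hb => (hL _ (hP b hb)).1) hm'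
  | large _ _ _ _ hL => exact good_sum P m q hq (fun b hb => hL _ (hP b hb)) hm'
  | late _ _ _ hL => exact good_sum P m q hq (fun b hb => hL _ (hP b hb)) hm'
  | crit _ _ _ _ hL => exact crit_sum P m q hq (fun b hb => hL _ (hP b hb)) hm'
  | critLate _ _ _ _ hL => exact crit_sum P m q hq (fun b hb => hL _ (hP b hb)) hm'

/-! ### Submodular valuations -/

/-- Normalized monotone submodular valuation on the subsets of `M`. -/
structure Valuation {ι : Type*} [DecidableEq ι] (M : Finset ι) (u : Finset ι → ℝ) : Prop where
  norm : u ∅ = 0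
  mono : ∀ S T : Finset ι, S ⊆ T → T ⊆ M → u S ≤ u T
  submod : ∀ S T : Finset ι, S ⊆ M → T ⊆ M → u (S ∪ T) + u (S ∩ T) ≤ u S + u T

variable {ι : Type*} [DecidableEq ι] {M : Finset ι}

lemma Valuation.marginal_anti {u : Finset ι → ℝ} (h : Valuation M u) {A A' : Finset ι} {b : ι}
    (hA : A ⊆ A') (hA' : A' ⊆ M) (hb : b ∈ M) :
    u (insert b A') - u A' ≤ u (insert b A) - u A := by
  have hbA : insert b A ⊆ M := Finset.insert_subset hb (hA.trans hA')
  have h1 := h.submod (insert b A) A' hbA hA'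
  have h2 : insert b A ∪ A' = insert b A' := by
    rw [Finset.insert_union, Finset.union_eq_right.2 hA]
  have h3 : u A ≤ u (insert b A ∩ A') :=
    h.mono _ _ (Finset.subset_inter (Finset.subset_insert _ _) hA)
      (Finset.inter_subset_right.trans hA')
  rw [h2] at h1
  linarith

lemma Valuation.union_le {u : Finset ι → ℝ} (h : Valuation M u) {A : Finset ι} (hA : A ⊆ M)
    (X : Finset ι) (hX : X ⊆ M) : u (A ∪ X) ≤ u A + ∑ b ∈ X, (u (insert b A) - u A) := by
  induction X using Finset.induction_on with
  | empty => simp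
  | insert b X hb ih =>
    have hbM : b ∈ M := hX (Finset.mem_insert_self _ _)
    have hXM : X ⊆ M := (Finset.subset_insert _ _).trans hX
    rw [Finset.sum_insert hb, Finset.union_insert]
    have h1 := h.marginal_anti (A := A) (A' := A ∪ X) Finset.subset_union_left
      (Finset.union_subset hA hXM) hbM
    have h2 := ih hXM
    linarith

/-! ### The game -/

/-- A position of the bidding game: `U` are the unsold items, `A i` the items bought by agent `i`,
`q b` the price of a sold item `b`, and `m i b` the maximal marginal value that agent `i` saw when
`b` was sold. -/
structure Game {n : ℕ} (M : Finset ι) (u : Fin n → Finset ι → ℝ) (U : Finset ι)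
    (A : Fin n → Finset ι) (q : ι → ℝ) (m : Fin n → ι → ℝ) : Prop where
  disj : ∀ i j, i ≠ j → Disjoint (A i) (A j)
  cover : ∀ b, b ∈ M ↔ b ∈ U ∨ ∃ i, b ∈ A i
  disjU : ∀ i, Disjoint U (A i)
  price_nonneg : ∀ i, ∀ b ∈ A i, 0 ≤ q b
  marginal_le : ∀ i k, k ≠ i → ∀ b ∈ A k, u i (insert b (A i)) - u i (A i) ≤ m i b
  inv : ∀ i, ∃ x, (∀ b ∈ U, u i (insert b (A i)) - u i (A i) ≤ x) ∧
    Inv (u i (A i)) (∑ b ∈ A i, q b) x {y | ∃ k, k ≠ i ∧ ∃ b ∈ A k, y = (m i b, q b)}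

lemma Game.subset {n : ℕ} {u : Fin n → Finset ι → ℝ} {U : Finset ι} {A : Fin n → Finset ι}
    {q : ι → ℝ} {m : Fin n → ι → ℝ} (h : Game M u U A q m) (i : Fin n) : A i ⊆ M :=
  fun b hb => (h.cover b).2 (.inr ⟨i, hb⟩)

lemma Game.start {n : ℕ} {u : Fin n → Finset ι → ℝ} (hu : ∀ i, Valuation M (u i)) :
    Game M u M (fun _ => ∅) (fun _ => 0) (fun _ _ => 0) where
  disj := by simp
  cover := by simp
  disjU := by simp
  price_nonneg := by simp
  marginal_le := by simp
  inv i := by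
    refine ⟨u i M, fun b hb => ?_, .fresh (hu i).norm (by simp) (by simp)⟩
    rw [(hu i).norm, sub_zero]
    exact (hu i).mono _ _ (by simpa using hb) subset_rfl

/-- One round: the highest bidder `k` buys her favourite item. -/
lemma Game.step {n : ℕ} (hn : 1 ≤ n) {u : Fin n → Finset ι → ℝ} (hu : ∀ i, Valuation M (u i))
    {U : Finset ι} (hU : U.Nonempty) {A : Fin n → Finset ι} {q : ι → ℝ} {m : Fin n → ι → ℝ}
    (h : Game M u U A q m) : ∃ b ∈ U, ∃ A' q' m', Game M u (U.erase b) A' q' m' := by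
  have : Nonempty (Fin n) := ⟨⟨0, hn⟩⟩
  have hUM : U ⊆ M := fun b hb => (h.cover b).2 (.inl hb)
  choose f hfU hf using fun i => U.exists_max_image (fun b => u i (insert b (A i)) - u i (A i)) hU
  set x : Fin n → ℝ := fun i => u i (insert (f i) (A i)) - u i (A i) with hx
  have hx0 : ∀ i, 0 ≤ x i := fun i => sub_nonneg.2 <|
    (hu i).mono _ _ (Finset.subset_insert _ _) (Finset.insert_subset (hUM (hfU i)) (h.subset i))
  have hinv : ∀ i, Inv (u i (A i)) (∑ b ∈ A i, q b) (x i)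
      {y | ∃ k, k ≠ i ∧ ∃ b ∈ A k, y = (m i b, q b)} := by
    intro i
    obtain ⟨z, hz, hI⟩ := h.inv i
    exact hI.mono (hz _ (hfU i)) subset_rfl
  set β : Fin n → ℝ := fun i => bid (u i (A i)) (∑ b ∈ A i, q b) (x i) with hβ
  obtain ⟨k, -, hk⟩ := Finset.univ.exists_max_image β Finset.univ_nonempty
  have hsold : ∀ i, f k ∉ A i := fun i => Finset.disjoint_left.1 (h.disjU i) (hfU k)
  have hq : ∀ i, ∀ b ∈ A i, Function.update q (f k) (β k) b = q b := fun i b hb =>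
    Function.update_of_ne (fun e : b = f k => hsold i (e ▸ hb)) _ _
  have hm : ∀ i j, ∀ b ∈ A i, Function.update (m j) (f k) (x j) b = m j b := fun i j b hb =>
    Function.update_of_ne (fun e : b = f k => hsold i (e ▸ hb)) _ _
  have hA'k : Function.update A k (insert (f k) (A k)) k = insert (f k) (A k) :=
    Function.update_self ..
  have hA' : ∀ i, i ≠ k → Function.update A k (insert (f k) (A k)) i = A i := fun i hi =>
    Function.update_of_ne hi _ _
  have hmem : ∀ i b, b ∈ Function.update A k (insert (f k) (A k)) i ↔
      (i = k ∧ b = f k) ∨ b ∈ A i := by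
    intro i b
    by_cases hi : i = k
    · subst hi
      simp
    · simp [hi]
  refine ⟨f k, hfU k, Function.update A k (insert (f k) (A k)), Function.update q (f k) (β k),
    fun i => Function.update (m i) (f k) (x i), ?_, ?_, ?_, ?_, ?_, ?_⟩
  · intro i j hij
    rw [Finset.disjoint_left]
    intro b hbi hbj
    rw [hmem] at hbi hbj
    rcases hbi with ⟨rfl, rfl⟩ | hbi
    · rcases hbj with ⟨rfl, -⟩ | hbj
      · exact hij rfl
      · exact hsold _ hbj
    · rcases hbj with ⟨rfl, rfl⟩ | hbj
      · exact hsold _ hbi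
      · exact Finset.disjoint_left.1 (h.disj i j hij) hbi hbj
  · intro b
    simp only [hmem, h.cover b, Finset.mem_erase]
    by_cases hb : b = f k
    · simp [hb, hfU k]
    · simp [hb]
  · intro i
    rw [Finset.disjoint_left]
    intro b hb hbi
    rw [Finset.mem_erase] at hb
    rcases (hmem i b).1 hbi with ⟨-, e⟩ | hbi
    · exact hb.1 e
    · exact Finset.disjoint_left.1 (h.disjU i) hb.2 hbi
  · intro i b hb
    rcases (hmem i b).1 hb with ⟨-, rfl⟩ | hb
    · rw [Function.update_self]
      exact (hinv k).bid_nonneg (hx0 k)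
    · rw [hq i b hb]
      exact h.price_nonneg i b hb
  · intro i j hji b hb
    rcases (hmem j b).1 hb with ⟨rfl, rfl⟩ | hb'
    · rw [hA' i hji.symm]
      simpa only [Function.update_self] using hf i _ (hfU j)
    · simp only [hm j i b hb']
      refine le_trans ?_ (h.marginal_le i j hji b hb')
      by_cases hi : i = k
      · subst hi
        rw [hA'k]
        exact (hu i).marginal_anti (Finset.subset_insert _ _)
          (Finset.insert_subset (hUM (hfU i)) (h.subset i)) (h.subset j hb')
      · rw [hA' i hi]
  · intro i
    refine ⟨x i, ?_⟩
    by_cases hi : i = k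
    · subst hi
      rw [hA'k]
      refine ⟨fun b hb => ?_, ?_⟩
      · have hbU := Finset.mem_of_mem_erase hb
        exact ((hu i).marginal_anti (Finset.subset_insert _ _)
          (Finset.insert_subset (hUM (hfU i)) (h.subset i)) (hUM hbU)).trans (hf i b hbU)
      · have e1 : u i (insert (f i) (A i)) = u i (A i) + x i := by simp [hx]
        have e2 : ∑ b ∈ insert (f i) (A i), Function.update q (f i) (β i) b =
            ∑ b ∈ A i, q b + β i := by
          rw [Finset.sum_insert (hsold i), Function.update_self, Finset.sum_congr rfl (hq i),
            add_comm]
        rw [e1, e2]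
        refine ((hinv i).win (hx0 i)).mono le_rfl ?_
        rintro y ⟨j, hj, b, hb, rfl⟩
        rw [hA' j hj] at hb
        exact ⟨j, hj, b, hb, by rw [hq j b hb, hm j i b hb]⟩
    · rw [hA' i hi, Finset.sum_congr rfl (hq i)]
      refine ⟨fun b hb => hf i b (Finset.mem_of_mem_erase hb), ?_⟩
      refine ((hinv i).lose (hx0 i) (hk i (Finset.mem_univ i))).mono le_rfl ?_
      rintro y ⟨j, hj, b, hb, rfl⟩
      rcases (hmem j b).1 hb with ⟨rfl, rfl⟩ | hb
      · exact .inl (by simp)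
      · exact .inr ⟨j, hj, b, hb, by rw [hq j b hb, hm j i b hb]⟩

lemma Game.finish {n : ℕ} (hn : 1 ≤ n) {u : Fin n → Finset ι → ℝ} (hu : ∀ i, Valuation M (u i)) :
    ∃ A q m, Game M u ∅ A q m := by
  have key : ∀ (c : ℕ) (U : Finset ι) (A : Fin n → Finset ι) (q : ι → ℝ) (m : Fin n → ι → ℝ),
      #U = c → Game M u U A q m → ∃ A q m, Game M u ∅ A q m := by
    intro c
    induction c with
    | zero =>
      intro U A q m hc h
      rw [Finset.card_eq_zero] at hc
      exact ⟨A, q, m, hc ▸ h⟩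
    | succ c ih =>
      intro U A q m hc h
      obtain ⟨b, hb, A', q', m', h'⟩ := h.step hn hu (Finset.card_pos.1 (by omega))
      exact ih _ A' q' m' (by rw [Finset.card_erase_of_mem hb]; omega) h'
  exact key _ _ _ _ _ rfl (Game.start hu)

/-- At the end of the game every agent owning a partition into bundles of value `27` has reached
value `10`. -/
lemma Game.target {n : ℕ} {u : Fin n → Finset ι → ℝ} (hu : ∀ i, Valuation M (u i))
    {A : Fin n → Finset ι} {q : ι → ℝ} {m : Fin n → ι → ℝ} (h : Game M u ∅ A q m) (i : Fin n)
    (B : Fin n → Finset ι) (hBd : ∀ j k, j ≠ k → Disjoint (B j) (B k)) (hBM : ∀ j, B j ⊆ M)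
    (hB : ∀ j, 27 ≤ u i (B j)) : 10 ≤ u i (A i) := by
  by_contra! hS
  obtain ⟨x, -, hI⟩ := h.inv i
  have hlost : ∀ b ∈ M, b ∉ A i → ∃ k, k ≠ i ∧ b ∈ A k := by
    intro b hb hbi
    rcases (h.cover b).1 hb with hb | ⟨k, hk⟩
    · simp at hb
    · exact ⟨k, fun e => hbi (e ▸ hk), hk⟩
  have hcost : ∀ j, 14 ≤ ∑ b ∈ B j \ A i, q b := by
    intro j
    have hl : ∀ b ∈ B j \ A i, ∃ k, k ≠ i ∧ b ∈ A k := fun b hb =>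
      hlost b (hBM j (Finset.mem_sdiff.1 hb).1) (Finset.mem_sdiff.1 hb).2
    refine hI.cost hS _ (m i) q (fun b hb => ?_) (fun b hb => ?_) ?_
    · obtain ⟨k, -, hk⟩ := hl b hb
      exact h.price_nonneg k b hk
    · obtain ⟨k, hki, hk⟩ := hl b hb
      exact ⟨k, hki, b, hk, rfl⟩
    · have hXM : B j \ A i ⊆ M := Finset.sdiff_subset.trans (hBM j)
      have h1 := (hu i).union_le (h.subset i) _ hXM
      have h2 : u i (B j) ≤ u i (A i ∪ B j \ A i) :=
        (hu i).mono _ _ (by simp) (Finset.union_subset (h.subset i) hXM)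
      have h3 : ∑ b ∈ B j \ A i, (u i (insert b (A i)) - u i (A i)) ≤ ∑ b ∈ B j \ A i, m i b := by
        refine Finset.sum_le_sum fun b hb => ?_
        obtain ⟨k, hki, hk⟩ := hl b hb
        exact h.marginal_le i k hki b hk
      linarith [hB j]
  have h1 : (14 : ℝ) * n ≤ ∑ j, ∑ b ∈ B j \ A i, q b := by
    have := Finset.card_nsmul_le_sum Finset.univ (fun j => ∑ b ∈ B j \ A i, q b) 14
      fun j _ => hcost j
    simpa [mul_comm] using this
  have h2 : ∑ j, ∑ b ∈ B j \ A i, q b ≤ ∑ k ∈ Finset.univ.erase i, ∑ b ∈ A k, q b := by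
    rw [← Finset.sum_biUnion, ← Finset.sum_biUnion]
    · refine Finset.sum_le_sum_of_subset_of_nonneg ?_ ?_
      · intro b hb
        simp only [Finset.mem_biUnion, Finset.mem_univ, true_and, Finset.mem_sdiff] at hb
        obtain ⟨j, hj, hbi⟩ := hb
        obtain ⟨k, hki, hk⟩ := hlost b (hBM j hj) hbi
        exact Finset.mem_biUnion.2 ⟨k, by simp [hki], hk⟩
      · intro b hb _
        obtain ⟨k, -, hk⟩ := Finset.mem_biUnion.1 hb
        exact h.price_nonneg k b hk
    · exact fun j _ k _ hjk => h.disj j k hjk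
    · exact fun j _ k _ hjk =>
        (hBd j k hjk).mono Finset.sdiff_subset Finset.sdiff_subset
  have h3 : ∑ k ∈ Finset.univ.erase i, ∑ b ∈ A k, q b ≤ 14 * ((n : ℝ) - 1) := by
    have := Finset.sum_le_card_nsmul (Finset.univ.erase i) (fun k => ∑ b ∈ A k, q b) 14
      fun k _ => (h.inv k).choose_spec.2.spent_le
    rw [Finset.card_erase_of_mem (Finset.mem_univ i), Finset.card_univ, Fintype.card_fin,
      nsmul_eq_mul, Nat.cast_sub (Nat.one_le_iff_ne_zero.2 (Fin.pos i).ne')] at this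
    push_cast at this
    linarith
  linarith

/-! ### The maximin share -/

lemma MMS_attained {n : ℕ} (hn : 1 ≤ n) (v : Finset ι → ℝ) :
    ∃ B : Fin n → Finset ι, (∀ i j, i ≠ j → Disjoint (B i) (B j)) ∧
      Finset.univ.biUnion B = M ∧ MMS n v M = ⨅ i, v (B i) := by
  unfold MMS
  set Z := {z : ℝ | ∃ B : Fin n → Finset ι, (∀ i j, i ≠ j → Disjoint (B i) (B j)) ∧
    (Finset.univ.biUnion B = M) ∧ z = ⨅ i, v (B i)} with hZ
  have hne : Z.Nonempty := by
    refine ⟨_, fun i => if i = ⟨0, hn⟩ then M else ∅, fun i j hij => ?_, ?_, rfl⟩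
    · by_cases hi : i = ⟨0, hn⟩
      · have hj : j ≠ ⟨0, hn⟩ := fun e => hij (hi.trans e.symm)
        simp [hj]
      · simp [hi]
    · ext b
      rw [Finset.mem_biUnion]
      constructor
      · rintro ⟨i, -, hi⟩
        split_ifs at hi
        · exact hi
        · simp at hi
      · exact fun hb => ⟨⟨0, hn⟩, Finset.mem_univ _, by simpa using hb⟩
  have hfin : Z.Finite := by
    refine ((Fintype.piFinset fun _ : Fin n => M.powerset).finite_toSet.image
      fun B => ⨅ i, v (B i)).subset ?_
    rintro z ⟨B, -, hBM, rfl⟩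
    refine ⟨B, ?_, rfl⟩
    simp only [Finset.mem_coe, Fintype.mem_piFinset, Finset.mem_powerset]
    exact fun i => hBM ▸ Finset.subset_biUnion_of_mem B (Finset.mem_univ i)
  exact hne.csSup_mem hfin

end BiddingGame

open BiddingGame in
theorem submodular_equal_entitlements_MMS_ten_twentysevenths
    {ι : Type*} [DecidableEq ι] (M : Finset ι) (n : ℕ) (hn : 1 ≤ n)
    (v : Fin n → Finset ι → ℝ)
    (hnorm : ∀ i, v i ∅ = 0)
    (hnonneg : ∀ i, ∀ S ⊆ M, 0 ≤ v i S)
    (hmono : ∀ i, ∀ S T : Finset ι, S ⊆ T → T ⊆ M → v i S ≤ v i T)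
    (hsubmod : ∀ i, ∀ S T : Finset ι, S ⊆ M → T ⊆ M →
      v i (S ∪ T) + v i (S ∩ T) ≤ v i S + v i T) :
    ∃ A : Fin n → Finset ι,
      (∀ i, A i ⊆ M) ∧
      (∀ i j, i ≠ j → Disjoint (A i) (A j)) ∧
      (∀ i, ((10 : ℝ) / 27) * MMS n (v i) M ≤ v i (A i)) := by
  -- rescale so that a positive maximin share becomes `27`; a zero share gives the zero valuation
  set u : Fin n → Finset ι → ℝ := fun i S => 27 / MMS n (v i) M * v i S with hu_def
  choose B hBd hBM hB using fun i => MMS_attained (M := M) hn (v i)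
  have hBsub : ∀ i j, B i j ⊆ M := fun i j =>
    hBM i ▸ Finset.subset_biUnion_of_mem (B i) (Finset.mem_univ j)
  have hμ : ∀ i, 0 ≤ MMS n (v i) M := fun i =>
    hB i ▸ Real.iInf_nonneg fun j => hnonneg i _ (hBsub i j)
  have hc : ∀ i, 0 ≤ 27 / MMS n (v i) M := fun i => div_nonneg (by norm_num) (hμ i)
  have hu : ∀ i, Valuation M (u i) := fun i =>
    { norm := by simp [hu_def, hnorm]
      mono := fun S T hST hT => mul_le_mul_of_nonneg_left (hmono i S T hST hT) (hc i)
      submod := fun S T hS hT => by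
        have := mul_le_mul_of_nonneg_left (hsubmod i S T hS hT) (hc i)
        simpa only [hu_def, mul_add] using this }
  obtain ⟨A, q, m, hG⟩ := Game.finish hn hu
  refine ⟨A, hG.subset, hG.disj, fun i => ?_⟩
  rcases (hμ i).eq_or_lt with h0 | hpos
  · rw [← h0, mul_zero]
    exact hnonneg i _ (hG.subset i)
  · have h27 : ∀ j, 27 ≤ u i (B i j) := by
      intro j
      have h1 : MMS n (v i) M ≤ v i (B i j) := by
        rw [hB i]
        exact ciInf_le (Set.finite_range _).bddBelow j
      simp only [hu_def]
      rw [div_mul_eq_mul_div, le_div_iff₀ hpos]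
      linarith
    have h10 := hG.target hu i (B i) (hBd i) (hBsub i) h27
    simp only [hu_def] at h10
    rw [div_mul_eq_mul_div, le_div_iff₀ hpos] at h10
    linarith
end

section
/- Let M be a finite set of items and let n agents have entitlements b_1, …, b_n ∈ (0,1] with Σ_i b_i = 1, where each agent's valuation v_i : 2^M → ℝ≥0 is normalized and monotone and is either (i) submodular, (ii) additive, or (iii) unit-demand. Then there exists an allocation (A_1, …, A_n) of pairwise disjoint subsets of M such that simultaneously: every submodular agent i gets v_i(A_i) ≥ (1/3) · APS(b_i, v_i, M); every additive agent i gets v_i(A_i) ≥ (3/5) · APS(b_i, v_i, M); and every unit-demand agent i gets v_i(A_i) ≥ APS(b_i, v_i, M). -/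
/-! The allocation comes from a bidding game. Every agent starts with her entitlement as budget; in
each round the highest bidder pays her bid and takes an item of her choice. It suffices to show
that each agent has a strategy that secures her target against arbitrary opponents holding the
remaining budget `1 - b` (`HasStrategy`): letting all agents play their strategies against each
other (`exists_allocation_of_invariants`) then satisfies all of them at once.

The strategies rest on the distribution `lam` on bundles in the definition of the anyprice share
(`IsCertificate`); after scaling, the share is `1`. By averaging, item prices at which every bundle
of value `1` costs at least `1` have total at least `1 / b`.

* A unit-demand agent bids everything until she wins an item of value at least the share. At least
  `1 / b` items are that good, and the others can afford fewer than `1 / b` of them.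
* A submodular agent (target `1 / 3`) bids everything while a single item reaches the target.
  Losing such an item destroys at most mass `b` of `lam`, so mass at least `b` plus the others'
  budget survives. Afterwards she bids `3 b / 2` times the largest marginal value. The expected
  value of what she holds together with the unsold part of a random surviving bundle falls too
  slowly for her to end below `1 / 3` (`SubmodularState`).
* An additive agent (target `3 / 5`) bids on the most valuable item `b` times `basePrice` of its
  value. If after two purchases a third one might be unaffordable at these prices, she switches to
  `pairPrice`. If all items were sold before she reached her target, she would have money left,
  while the prices at which items were sold make every bundle of value `1` cost at least `1`
  (`one_le_sum_basePrice`, `one_le_sum_mixedPrice`), so their total would be at least `1 / b`. That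
  exceeds what the others and she have spent. -/

open Finset

/-- `v` is submodular on subsets of `M`. -/
def IsSubmodularOn {ι : Type*} [DecidableEq ι] (v : Finset ι → ℝ) (M : Finset ι) : Prop :=
  ∀ S T : Finset ι, S ⊆ M → T ⊆ M → v (S ∪ T) + v (S ∩ T) ≤ v S + v T

/-- `v` is additive on subsets of `M`: sums of nonnegative item weights. -/
def IsAdditiveOn {ι : Type*} (v : Finset ι → ℝ) (M : Finset ι) : Prop :=
  ∃ w : ι → ℝ, (∀ e, 0 ≤ w e) ∧ ∀ S ⊆ M, v S = ∑ e ∈ S, w e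

/-- `v` is unit-demand on subsets of `M`: the maximum item weight in the bundle. -/
def IsUnitDemandOn {ι : Type*} (v : Finset ι → ℝ) (M : Finset ι) : Prop :=
  ∃ w : ι → ℝ, (∀ e, 0 ≤ w e) ∧ v ∅ = 0 ∧
    ∀ S : Finset ι, S ⊆ M → ∀ hS : S.Nonempty, v S = S.sup' hS w
/-! ### The bidding game -/

/-- A predicate on states of the bidding game, as seen by one agent with valuation `u`, which the
agent can maintain and which forces value at least `τ` at the end. In a state `(R, A, β, B)` the
unassigned items are `R`, the agent holds `A` and has budget `β` left, and the other agents
together have budget `B` left. The agent names an affordable bid `p` and an item `e`; the predicate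
must survive both winning the round (taking `e` for `p`) and losing it (somebody takes an
arbitrary item for at least `p`). -/
def IsWinningInvariant {ι : Type*} [DecidableEq ι] (u : Finset ι → ℝ) (τ : ℝ)
    (I : Finset ι → Finset ι → ℝ → ℝ → Prop) : Prop :=
  ∀ R A β B, I R A β B → (R = ∅ → τ ≤ u A) ∧
    (R.Nonempty → ∃ p, 0 ≤ p ∧ p ≤ β ∧ ∃ e ∈ R, I (R.erase e) (insert e A) (β - p) B ∧
      ∀ e' ∈ R, ∀ c, p ≤ c → c ≤ B → I (R.erase e') A β (B - c))

/-- In the bidding game on `M`, an agent with valuation `u` and budget `b` (out of total budget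
`1`) can secure value `τ`, whatever the other agents do. -/
def HasStrategy {ι : Type*} [DecidableEq ι] (M : Finset ι) (u : Finset ι → ℝ) (b τ : ℝ) : Prop :=
  ∃ I, IsWinningInvariant u τ I ∧ I M ∅ b (1 - b)

/-- Playing the game from a state in which every agent's invariant holds: in each round the
highest bidder wins. -/
theorem exists_allocation_of_invariants {ι : Type*} [DecidableEq ι] (M : Finset ι) {n : ℕ}
    (hn : 0 < n) (u : Fin n → Finset ι → ℝ) (τ : Fin n → ℝ)
    (I : Fin n → Finset ι → Finset ι → ℝ → ℝ → Prop)
    (hI : ∀ i, IsWinningInvariant (u i) (τ i) (I i)) (k : ℕ) :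
    ∀ (R : Finset ι) (A : Fin n → Finset ι) (β : Fin n → ℝ), R.card = k → R ⊆ M →
      (∀ i, A i ⊆ M) → (∀ i, Disjoint (A i) R) → (∀ i j, i ≠ j → Disjoint (A i) (A j)) →
      (∀ i, I i R (A i) (β i) (∑ j, β j - β i)) →
      ∃ A' : Fin n → Finset ι, (∀ i, A' i ⊆ M) ∧ (∀ i j, i ≠ j → Disjoint (A' i) (A' j)) ∧
        ∀ i, τ i ≤ u i (A' i) := by
  induction k with
  | zero =>
    intro R A β hk hR hA hAR hAA hinv
    exact ⟨A, hA, hAA, fun i => (hI i _ _ _ _ (hinv i)).1 (Finset.card_eq_zero.1 hk)⟩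
  | succ k ih =>
    intro R A β hk hR hA hAR hAA hinv
    have hne : R.Nonempty := Finset.card_pos.1 (by omega)
    choose p hp0 hpβ e heR hwin hlose using fun i => (hI i _ _ _ _ (hinv i)).2 hne
    have : Nonempty (Fin n) := ⟨⟨0, hn⟩⟩
    obtain ⟨m, -, hm⟩ := Finset.exists_max_image Finset.univ p Finset.univ_nonempty
    have hsum : ∑ j, Function.update β m (β m - p m) j = ∑ j, β j - p m := by
      rw [Finset.sum_update_of_mem (Finset.mem_univ m),
        ← Finset.add_sum_erase _ β (Finset.mem_univ m), Finset.sdiff_singleton_eq_erase]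
      ring
    refine ih (R.erase (e m)) (Function.update A m (insert (e m) (A m)))
      (Function.update β m (β m - p m)) ?_ ?_ ?_ ?_ ?_ ?_
    · rw [Finset.card_erase_of_mem (heR m)]; omega
    · exact (Finset.erase_subset _ _).trans hR
    · intro i
      by_cases h : i = m
      · subst h
        simpa using Finset.insert_subset (hR (heR i)) (hA i)
      · simpa [h] using hA i
    · intro i
      by_cases h : i = m
      · subst h
        simpa using (hAR i).mono_right (Finset.erase_subset _ _)
      · simpa [h] using (hAR i).mono_right (Finset.erase_subset _ _)
    · intro i j hij
      have hnot : ∀ i, e m ∉ A i := fun i h => Finset.disjoint_left.1 (hAR i) h (heR m)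
      by_cases h : i = m
      · subst h
        simp [Ne.symm hij, hAA i j hij, hnot j]
      · by_cases h' : j = m
        · subst h'
          simp [h, hAA i j hij, hnot i]
        · simpa [h, h'] using hAA i j hij
    · intro i
      rw [hsum]
      by_cases h : i = m
      · subst h
        simp only [Function.update_self]
        convert hwin i using 1
        ring
      · simp only [Function.update_of_ne h]
        have h1 := hlose i (e m) (heR m) (p m) (hm i (Finset.mem_univ i)) ?_
        · convert h1 using 1
          ring
        · have h2 : ∑ j ∈ {i, m}, β j ≤ ∑ j, β j :=
            Finset.sum_le_sum_of_subset_of_nonneg (Finset.subset_univ _)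
              fun j _ _ => (hp0 j).trans (hpβ j)
          rw [Finset.sum_pair h] at h2
          linarith [hpβ m]

/-- An agent who has reached her target may bid `0` from then on, so an invariant has to be
maintained only until the target is reached. -/
theorem HasStrategy.of_step {ι : Type*} [DecidableEq ι] {M : Finset ι} {u : Finset ι → ℝ}
    {b τ : ℝ} (hmono : ∀ S T : Finset ι, S ⊆ T → T ⊆ M → u S ≤ u T)
    (I : Finset ι → Finset ι → ℝ → ℝ → Prop) (hinit : I M ∅ b (1 - b))
    (hstep : ∀ R A β B, I R A β B → R ⊆ M ∧ A ⊆ M ∧ (R = ∅ → τ ≤ u A) ∧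
      (R.Nonempty → ∃ p, 0 ≤ p ∧ p ≤ β ∧ ∃ e ∈ R,
        (I (R.erase e) (insert e A) (β - p) B ∨ τ ≤ u (insert e A)) ∧
        ∀ e' ∈ R, ∀ p', p ≤ p' → p' ≤ B → I (R.erase e') A β (B - p'))) :
    HasStrategy M u b τ := by
  refine ⟨fun R A β B => I R A β B ∨ (R ⊆ M ∧ A ⊆ M ∧ 0 ≤ β ∧ τ ≤ u A), ?_, Or.inl hinit⟩
  rintro R A β B (h | ⟨hR, hA, hβ, hτ⟩)
  · obtain ⟨hR, hA, h1, h2⟩ := hstep R A β B h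
    refine ⟨h1, fun hne => ?_⟩
    obtain ⟨p, hp0, hpβ, e, he, hw, hl⟩ := h2 hne
    refine ⟨p, hp0, hpβ, e, he, ?_, fun e' he' p' h3 h4 => Or.inl (hl e' he' p' h3 h4)⟩
    rcases hw with hw | hw
    · exact Or.inl hw
    · exact Or.inr ⟨(Finset.erase_subset _ _).trans hR, Finset.insert_subset (hR he) hA,
        by linarith, hw⟩
  · refine ⟨fun _ => hτ, fun ⟨e, he⟩ => ⟨0, le_rfl, hβ, e, he, Or.inr ?_, ?_⟩⟩
    · have hins : insert e A ⊆ M := Finset.insert_subset (hR he) hA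
      exact ⟨(Finset.erase_subset _ _).trans hR, hins, by linarith,
        hτ.trans (hmono _ _ (Finset.subset_insert _ _) hins)⟩
    · exact fun e' _ p' _ _ => Or.inr ⟨(Finset.erase_subset _ _).trans hR, hA, hβ, hτ⟩

theorem HasStrategy.of_div {ι : Type*} [DecidableEq ι] {M : Finset ι} {u : Finset ι → ℝ}
    {b τ z : ℝ} (hz : 0 < z) (h : HasStrategy M (fun S => u S / z) b τ) :
    HasStrategy M u b (τ * z) := by
  obtain ⟨I, hI, h0⟩ := h
  exact ⟨I, fun R A β B h => ⟨fun hR => (le_div_iff₀ hz).1 ((hI R A β B h).1 hR),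
    (hI R A β B h).2⟩, h0⟩

theorem HasStrategy.of_nonpos {ι : Type*} [DecidableEq ι] {M : Finset ι} {u : Finset ι → ℝ}
    {b τ : ℝ} (hb : 0 < b) (hnonneg : ∀ S ⊆ M, 0 ≤ u S) (hτ : τ ≤ 0) :
    HasStrategy M u b τ := by
  refine ⟨fun R A β _ => R ⊆ M ∧ A ⊆ M ∧ 0 ≤ β, ?_, ⟨subset_rfl, by simp, hb.le⟩⟩
  rintro R A β B ⟨hR, hA, hβ⟩
  refine ⟨fun _ => hτ.trans (hnonneg A hA), fun ⟨e, he⟩ => ⟨0, le_rfl, hβ, e, he, ?_, ?_⟩⟩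
  · exact ⟨(Finset.erase_subset _ _).trans hR, Finset.insert_subset (hR he) hA, by linarith⟩
  · exact fun e' _ p' _ _ => ⟨(Finset.erase_subset _ _).trans hR, hA, hβ⟩

/-! ### Fractional certificates for the anyprice share -/

/-- `lam` is a probability distribution on the subsets of `M`, supported on sets of value at
least `z`, in which no item appears with probability more than `b`. -/
structure IsCertificate {ι : Type*} [DecidableEq ι] (M : Finset ι) (u : Finset ι → ℝ) (b z : ℝ)
    (lam : Finset ι → ℝ) : Prop where
  nonneg : ∀ S, 0 ≤ lam S
  sum_eq : ∑ S ∈ M.powerset, lam S = 1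
  supp : ∀ S ∈ M.powerset, u S < z → lam S = 0
  load : ∀ e ∈ M, ∑ S ∈ M.powerset.filter (fun S => e ∈ S), lam S ≤ b

theorem IsCertificate.div {ι : Type*} [DecidableEq ι] {M : Finset ι} {u : Finset ι → ℝ}
    {b z : ℝ} {lam : Finset ι → ℝ} (hz : 0 < z) (h : IsCertificate M u b z lam) :
    IsCertificate M (fun S => u S / z) b 1 lam :=
  ⟨h.nonneg, h.sum_eq, fun S hS hlt => h.supp S hS (by rwa [div_lt_one hz] at hlt), h.load⟩

/-- The supremum defining a positive anyprice share is attained, because only finitely many values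
of bundles lie below it. -/
theorem exists_isCertificate {ι : Type*} [DecidableEq ι] {M : Finset ι} {u : Finset ι → ℝ}
    {b : ℝ} (hpos : 0 < APS b u M) : ∃ lam, IsCertificate M u b (APS b u M) lam := by
  set z := APS b u M with hz
  obtain ⟨y, hy, hyS⟩ : ∃ y < z, ∀ S ∈ M.powerset, u S < z → u S ≤ y := by
    have hne : (insert (z - 1) ((M.powerset.image u).filter (· < z))).Nonempty :=
      Finset.insert_nonempty _ _
    refine ⟨_, (Finset.max'_lt_iff _ hne).2 ?_, fun S hS h => Finset.le_max' _ _ ?_⟩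
    · intro x hx
      rcases Finset.mem_insert.1 hx with rfl | hx
      · linarith
      · exact (Finset.mem_filter.1 hx).2
    · exact Finset.mem_insert_of_mem
        (Finset.mem_filter.2 ⟨Finset.mem_image_of_mem u hS, h⟩)
  unfold APS at hz
  obtain ⟨z', ⟨-, lam, h1, h2, h3, h4⟩, hlt⟩ := exists_lt_of_lt_csSup (by
    by_contra hemp
    rw [Set.not_nonempty_iff_eq_empty] at hemp
    rw [hemp, Real.sSup_empty] at hz
    linarith) (hz ▸ hy)
  exact ⟨lam, h1, h2, fun S hS h => h3 S hS ((hyS S hS h).trans_lt hlt), h4⟩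

theorem APS_nonneg {ι : Type*} [DecidableEq ι] (M : Finset ι) (u : Finset ι → ℝ) (b : ℝ) :
    0 ≤ APS b u M :=
  Real.sSup_nonneg fun _ h => h.1

/-- The averaging step behind the weak duality between the two definitions of the anyprice share:
nonnegative item prices that make every valuable bundle cost at least `1` have total at least
`1 / b`. -/
theorem IsCertificate.one_le_mul_sum {ι : Type*} [DecidableEq ι] {M : Finset ι}
    {u : Finset ι → ℝ} {b z : ℝ} {lam : Finset ι → ℝ} (h : IsCertificate M u b z lam)
    (q : ι → ℝ) (hq : ∀ e ∈ M, 0 ≤ q e) (hS : ∀ S ⊆ M, z ≤ u S → 1 ≤ ∑ e ∈ S, q e) :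
    1 ≤ b * ∑ e ∈ M, q e := by
  calc (1 : ℝ) = ∑ S ∈ M.powerset, lam S := h.sum_eq.symm
    _ ≤ ∑ S ∈ M.powerset, ∑ e ∈ M, (if e ∈ S then lam S * q e else 0) := by
        refine Finset.sum_le_sum fun S hSM => ?_
        rw [← Finset.sum_filter, Finset.filter_mem_eq_inter,
          Finset.inter_eq_right.2 (Finset.mem_powerset.1 hSM), ← Finset.mul_sum]
        rcases lt_or_ge (u S) z with hlt | hge
        · simp [h.supp S hSM hlt]
        · exact le_mul_of_one_le_right (h.nonneg S) (hS S (Finset.mem_powerset.1 hSM) hge)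
    _ = ∑ e ∈ M, (∑ S ∈ M.powerset.filter (fun S => e ∈ S), lam S) * q e := by
        rw [Finset.sum_comm]
        refine Finset.sum_congr rfl fun e _ => ?_
        rw [← Finset.sum_filter, Finset.sum_mul]
    _ ≤ ∑ e ∈ M, b * q e :=
        Finset.sum_le_sum fun e he => mul_le_mul_of_nonneg_right (h.load e he) (hq e he)
    _ = b * ∑ e ∈ M, q e := by rw [Finset.mul_sum]

/-! ### Unit-demand agents -/

/-- The agent bids her whole budget until she wins once. The certificate shows that at least
`1 / b` items are worth `z`, and the others can afford to remove fewer than that. -/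
theorem hasStrategy_of_unitDemand {ι : Type*} [DecidableEq ι] {M : Finset ι}
    {u : Finset ι → ℝ} {b z : ℝ} {lam : Finset ι → ℝ} (hb : 0 < b) (hb1 : b ≤ 1) (hz : 0 < z)
    (hmono : ∀ S T : Finset ι, S ⊆ T → T ⊆ M → u S ≤ u T)
    (hu : IsUnitDemandOn u M) (h : IsCertificate M u b z lam) : HasStrategy M u b z := by
  obtain ⟨w, hw, hu0, huw⟩ := hu
  set K : Finset ι := M.filter (fun e => z ≤ w e) with hK
  have hsingle : ∀ e ∈ K, z ≤ u {e} := fun e he => by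
    rw [huw {e} (by simpa using (Finset.mem_filter.1 he).1) (Finset.singleton_nonempty e)]
    simpa using (Finset.mem_filter.1 he).2
  have hcard : 1 ≤ b * (K.card : ℝ) := by
    have := h.one_le_mul_sum (fun e => if z ≤ w e then 1 else 0)
      (fun e _ => by positivity) ?_
    · rwa [← Finset.sum_filter, Finset.sum_const, nsmul_eq_mul, mul_one] at this
    · intro S hSM hzS
      have hne : S.Nonempty := by
        rw [Finset.nonempty_iff_ne_empty]
        rintro rfl
        linarith
      rw [huw S hSM hne] at hzS
      obtain ⟨e, he, hze⟩ := (Finset.le_sup'_iff hne).1 hzS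
      have := Finset.single_le_sum (f := fun e => if z ≤ w e then (1 : ℝ) else 0)
        (fun e _ => by positivity) he
      simpa [hze] using this
  refine HasStrategy.of_step hmono
    (fun R A β B => R ⊆ M ∧ A ⊆ M ∧ β = b ∧ 0 ≤ B ∧ B + b ≤ b * ((K ∩ R).card : ℝ)) ?_ ?_
  · refine ⟨subset_rfl, by simp, rfl, by linarith, ?_⟩
    rw [Finset.inter_eq_left.2 (Finset.filter_subset _ _)]
    linarith
  · rintro R A β B ⟨hR, hA, rfl, hB, hBK⟩
    have hne : (K ∩ R).Nonempty := by
      rw [Finset.nonempty_iff_ne_empty]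
      intro h0
      rw [h0] at hBK
      simp at hBK
      linarith
    obtain ⟨e, he⟩ := hne
    obtain ⟨heK, heR⟩ := Finset.mem_inter.1 he
    refine ⟨hR, hA, fun h0 => by simp [h0] at heR, fun _ => ⟨β, hb.le, le_rfl, e, heR, ?_, ?_⟩⟩
    · exact Or.inr ((hsingle e heK).trans (hmono _ _ (by simp)
        (Finset.insert_subset (hR heR) hA)))
    · intro e' he' p' hp hpB
      refine ⟨(Finset.erase_subset _ _).trans hR, hA, rfl, by linarith, ?_⟩
      have h1 : (K ∩ R).card ≤ (K ∩ R.erase e').card + 1 := by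
        rw [Finset.inter_erase]
        have := Finset.pred_card_le_card_erase (s := K ∩ R) (a := e')
        omega
      have h2 : ((K ∩ R).card : ℝ) ≤ (K ∩ R.erase e').card + 1 := by exact_mod_cast h1
      nlinarith

/-! ### Submodular agents -/

/-- Removing an item from a bundle on top of `A` costs at most the marginal value of the item
over `A`. -/
theorem submodular_erase_le {ι : Type*} [DecidableEq ι] {M : Finset ι} {u : Finset ι → ℝ}
    (hmono : ∀ S T : Finset ι, S ⊆ T → T ⊆ M → u S ≤ u T) (hsub : IsSubmodularOn u M)
    {A X : Finset ι} (hA : A ⊆ M) (hX : X ⊆ M) {e : ι} (he : e ∈ M) :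
    u (A ∪ X) - u (A ∪ X.erase e) ≤ u (insert e A) - u A := by
  have hXe : X.erase e ⊆ M := (Finset.erase_subset _ _).trans hX
  have h1 := hsub (insert e A) (A ∪ X.erase e) (Finset.insert_subset he hA)
    (Finset.union_subset hA hXe)
  have h2 : u A ≤ u (insert e A ∩ (A ∪ X.erase e)) :=
    hmono _ _ (Finset.subset_inter (Finset.subset_insert _ _) Finset.subset_union_left)
      (Finset.inter_subset_left.trans (Finset.insert_subset he hA))
  have h3 : u (A ∪ X) ≤ u (insert e A ∪ (A ∪ X.erase e)) := by
    refine hmono _ _ ?_ (Finset.union_subset (Finset.insert_subset he hA)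
      (Finset.union_subset hA hXe))
    intro x
    simp only [Finset.mem_union, Finset.mem_insert, Finset.mem_erase]
    tauto
  linarith

/-- The state of a submodular agent (target `1 / 3`, share `1`) once no remaining item is worth
`1 / 3` on its own. From now on she bids `3 b / 2` times the largest marginal value. The weights
`μ` are the part of the certificate still intact when this phase began. Losing an item at price
`p'` lowers the right-hand side of `potential` by at most `2 / 3 * p'`, because each item has load
at most `b`; winning does not lower it. -/
structure SubmodularState {ι : Type*} [DecidableEq ι] (M : Finset ι) (u : Finset ι → ℝ) (b : ℝ)
    (R A : Finset ι) (β B : ℝ) (μ : Finset ι → ℝ) : Prop where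
  nonneg : ∀ S, 0 ≤ μ S
  pos : 0 < ∑ S ∈ M.powerset, μ S
  load : ∀ e ∈ M, ∑ S ∈ M.powerset.filter (fun S => e ∈ S), μ S ≤ b
  value_lt : u A < 1 / 3
  small : ∀ e ∈ R, u {e} < 1 / 3
  budget : b - 3 / 2 * b * u A ≤ β
  potential : (∑ S ∈ M.powerset, μ S) / 3 + 2 / 3 * B ≤
    ∑ S ∈ M.powerset, μ S * u (A ∪ (S ∩ R))

theorem SubmodularState.step {ι : Type*} [DecidableEq ι] {M : Finset ι} {u : Finset ι → ℝ}
    {b : ℝ} {R A : Finset ι} {β B : ℝ} {μ : Finset ι → ℝ} (hb : 0 < b)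
    (hnorm : u ∅ = 0) (hmono : ∀ S T : Finset ι, S ⊆ T → T ⊆ M → u S ≤ u T)
    (hsub : IsSubmodularOn u M) (hR : R ⊆ M) (hA : A ⊆ M) (hne : R.Nonempty)
    (h : SubmodularState M u b R A β B μ) :
    ∃ p, 0 ≤ p ∧ p ≤ β ∧ ∃ e ∈ R,
      (SubmodularState M u b (R.erase e) (insert e A) (β - p) B μ ∨ 1 / 3 ≤ u (insert e A)) ∧
      ∀ e' ∈ R, ∀ p', p ≤ p' → SubmodularState M u b (R.erase e') A β (B - p') μ := by
  obtain ⟨e, he, hmax⟩ := Finset.exists_max_image R (fun e => u (insert e A)) hne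
  have hins : insert e A ⊆ M := Finset.insert_subset (hR he) hA
  have hδ0 : u A ≤ u (insert e A) := hmono _ _ (Finset.subset_insert _ _) hins
  have hδ : u (insert e A) - u A < 1 / 3 := by
    have h1 := hsub A {e} hA (by simpa using hR he)
    have h2 : 0 ≤ u (A ∩ {e}) := by
      rw [← hnorm]
      exact hmono _ _ (by simp) (Finset.inter_subset_left.trans hA)
    have h3 : A ∪ {e} = insert e A := by
      rw [Finset.union_comm, Finset.insert_eq]
    rw [h3] at h1
    linarith [h.small e he]
  refine ⟨3 / 2 * b * (u (insert e A) - u A), by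
    have : 0 ≤ u (insert e A) - u A := by linarith
    positivity, ?_, e, he, ?_, ?_⟩
  · have := h.budget
    have := h.value_lt
    nlinarith
  · rcases lt_or_ge (u (insert e A)) (1 / 3) with hlt | hge
    · refine Or.inl ⟨h.nonneg, h.pos, h.load, hlt,
        fun x hx => h.small x (Finset.mem_of_mem_erase hx), ?_, h.potential.trans ?_⟩
      · linarith [h.budget]
      · refine Finset.sum_le_sum fun S hS => mul_le_mul_of_nonneg_left (hmono _ _ ?_ ?_)
          (h.nonneg S)
        · intro x
          simp only [Finset.mem_union, Finset.mem_inter, Finset.mem_insert, Finset.mem_erase]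
          tauto
        · exact Finset.union_subset hins (Finset.inter_subset_left.trans
            (Finset.mem_powerset.1 hS))
    · exact Or.inr hge
  · intro e' he' p' hp'
    refine ⟨h.nonneg, h.pos, h.load, h.value_lt,
      fun x hx => h.small x (Finset.mem_of_mem_erase hx), h.budget, ?_⟩
    have hkey : ∑ S ∈ M.powerset, μ S * u (A ∪ (S ∩ R)) -
        ∑ S ∈ M.powerset, μ S * u (A ∪ (S ∩ R.erase e')) ≤
        b * (u (insert e' A) - u A) := by
      rw [← Finset.sum_sub_distrib]
      have hδ' : 0 ≤ u (insert e' A) - u A := by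
        linarith [hmono _ _ (Finset.subset_insert e' A) (Finset.insert_subset (hR he') hA)]
      calc _ ≤ ∑ S ∈ M.powerset, (if e' ∈ S then μ S * (u (insert e' A) - u A) else 0) := by
            refine Finset.sum_le_sum fun S hS => ?_
            rw [Finset.inter_erase]
            split_ifs with heS
            · rw [← mul_sub]
              exact mul_le_mul_of_nonneg_left (submodular_erase_le hmono hsub hA
                (Finset.inter_subset_right.trans hR) (hR he')) (h.nonneg S)
            · rw [Finset.erase_eq_of_notMem (by simp [heS]), sub_self]
        _ = (∑ S ∈ M.powerset.filter (fun S => e' ∈ S), μ S) * (u (insert e' A) - u A) := by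
            rw [← Finset.sum_filter, Finset.sum_mul]
        _ ≤ _ := mul_le_mul_of_nonneg_right (h.load e' (hR he')) hδ'
    have h1 := h.potential
    have h2 := hmax e' he'
    nlinarith

/-- While some remaining item is worth `1 / 3`, the agent bids her whole budget `b`; each item lost
at that price destroys at most `b` of the mass of the certificate. Afterwards she bids in
proportion to marginal values. -/
theorem hasStrategy_of_submodular {ι : Type*} [DecidableEq ι] {M : Finset ι}
    {u : Finset ι → ℝ} {b : ℝ} {lam : Finset ι → ℝ} (hb : 0 < b) (hb1 : b ≤ 1)
    (hnorm : u ∅ = 0) (hmono : ∀ S T : Finset ι, S ⊆ T → T ⊆ M → u S ≤ u T)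
    (hsub : IsSubmodularOn u M) (h : IsCertificate M u b 1 lam) :
    HasStrategy M u b (1 / 3) := by
  refine HasStrategy.of_step hmono
    (fun R A β B => R ⊆ M ∧ A ⊆ M ∧ 0 ≤ B ∧
      ((A = ∅ ∧ β = b ∧ b + B ≤ ∑ S ∈ R.powerset, lam S) ∨
        ∃ μ, SubmodularState M u b R A β B μ)) ?_ ?_
  · refine ⟨subset_rfl, by simp, by linarith, Or.inl ⟨rfl, rfl, ?_⟩⟩
    rw [h.sum_eq]
    linarith
  · have hsecond : ∀ R A β B, R ⊆ M → A ⊆ M → 0 ≤ B → (∃ μ, SubmodularState M u b R A β B μ) →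
        R ⊆ M ∧ A ⊆ M ∧ (R = ∅ → 1 / 3 ≤ u A) ∧
        (R.Nonempty → ∃ p, 0 ≤ p ∧ p ≤ β ∧ ∃ e ∈ R,
          ((R.erase e ⊆ M ∧ insert e A ⊆ M ∧ 0 ≤ B ∧
            ((insert e A = ∅ ∧ β - p = b ∧ b + B ≤ ∑ S ∈ (R.erase e).powerset, lam S) ∨
              ∃ μ, SubmodularState M u b (R.erase e) (insert e A) (β - p) B μ)) ∨
            1 / 3 ≤ u (insert e A)) ∧
          ∀ e' ∈ R, ∀ p', p ≤ p' → p' ≤ B → (R.erase e' ⊆ M ∧ A ⊆ M ∧ 0 ≤ B - p' ∧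
            ((A = ∅ ∧ β = b ∧ b + (B - p') ≤ ∑ S ∈ (R.erase e').powerset, lam S) ∨
              ∃ μ, SubmodularState M u b (R.erase e') A β (B - p') μ))) := by
      rintro R A β B hR hA hB ⟨μ, hμ⟩
      refine ⟨hR, hA, ?_, fun hne => ?_⟩
      · rintro rfl
        have h1 := hμ.potential
        simp only [Finset.inter_empty, Finset.union_empty, ← Finset.sum_mul] at h1
        have h2 := hμ.pos
        nlinarith
      · obtain ⟨p, hp0, hpβ, e, he, hw, hl⟩ := hμ.step hb hnorm hmono hsub hR hA hne
        refine ⟨p, hp0, hpβ, e, he, ?_, fun e' he' p' h1 h2 =>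
          ⟨(Finset.erase_subset _ _).trans hR, hA, by linarith, Or.inr ⟨μ, hl e' he' p' h1⟩⟩⟩
        rcases hw with hw | hw
        · exact Or.inl ⟨(Finset.erase_subset _ _).trans hR, Finset.insert_subset (hR he) hA, hB,
            Or.inr ⟨μ, hw⟩⟩
        · exact Or.inr hw
    rintro R A β B ⟨hR, hA, hB, ⟨rfl, rfl, hmass⟩ | hμ⟩
    · by_cases hbig : ∃ e ∈ R, 1 / 3 ≤ u {e}
      · obtain ⟨e, he, hue⟩ := hbig
        refine ⟨hR, hA, fun h0 => by simp [h0] at he, fun _ => ⟨β, hb.le, le_rfl, e, he,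
          Or.inr (by simpa using hue), fun e' he' p' hp hpB =>
            ⟨(Finset.erase_subset _ _).trans hR, hA, by linarith, Or.inl ⟨rfl, rfl, ?_⟩⟩⟩⟩
        have h1 : ∑ S ∈ R.powerset, lam S ≤ ∑ S ∈ (R.erase e').powerset, lam S +
            ∑ S ∈ M.powerset.filter (fun S => e' ∈ S), lam S := by
          rw [← Finset.sum_filter_not_add_sum_filter R.powerset (fun S => e' ∈ S)]
          refine add_le_add ?_ ?_
          · refine Finset.sum_le_sum_of_subset_of_nonneg ?_ fun S _ _ => h.nonneg S
            intro S
            simp only [Finset.mem_filter, Finset.mem_powerset, Finset.subset_erase]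
            exact id
          · exact Finset.sum_le_sum_of_subset_of_nonneg (Finset.filter_subset_filter _
              (Finset.powerset_mono.2 hR)) fun S _ _ => h.nonneg S
        linarith [h.load e' (hR he')]
      · push Not at hbig
        -- the certificate restricted to the bundles inside `R` starts the second phase
        refine hsecond R ∅ β B hR hA hB ⟨fun S => if S ⊆ R then lam S else 0, ?_⟩
        have hsum : ∑ S ∈ M.powerset, (if S ⊆ R then lam S else 0) =
            ∑ S ∈ R.powerset, lam S := by
          rw [← Finset.sum_filter]
          refine Finset.sum_congr ?_ fun _ _ => rfl
          ext S
          simp only [Finset.mem_filter, Finset.mem_powerset]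
          exact ⟨fun h => h.2, fun h => ⟨h.trans hR, h⟩⟩
        have hle : ∀ S, (if S ⊆ R then lam S else 0) ≤ lam S := fun S => by
          split_ifs
          · exact le_rfl
          · exact h.nonneg S
        refine ⟨fun S => ?_, ?_, fun e he => ?_, by rw [hnorm]; norm_num, hbig, ?_, ?_⟩
        · have := h.nonneg S
          positivity
        · rw [hsum]
          linarith
        · exact (Finset.sum_le_sum fun S _ => hle S).trans (h.load e he)
        · rw [hnorm]
          linarith
        · have h1 : ∑ S ∈ M.powerset, (if S ⊆ R then lam S else 0) ≤
              ∑ S ∈ M.powerset, (if S ⊆ R then lam S else 0) * u (∅ ∪ (S ∩ R)) := by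
            refine Finset.sum_le_sum fun S hS => ?_
            split_ifs with hSR
            · rw [Finset.empty_union, Finset.inter_eq_left.2 hSR]
              rcases lt_or_ge (u S) 1 with hlt | hge
              · simp [h.supp S hS hlt]
              · exact le_mul_of_one_le_right (h.nonneg S) hge
            · simp
          refine le_trans ?_ h1
          rw [hsum]
          linarith
    · exact hsecond R A β B hR hA hB hμ

/-! ### Additive agents -/

/-- The basic price (as a fraction of the agent's budget) of an item of value `x`, when the share
is `1` and the target is `3 / 5`. -/
noncomputable def basePrice (x : ℝ) : ℝ :=
  if 3 / 5 ≤ x then 1 else if 2 / 5 ≤ x then 1 / 2 else 5 / 4 * x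

/-- The price used after two items of total value `σ` have been bought at the basic rate `5 / 4`:
an item that completes the target `3 / 5` costs all the money left, `1 - 5 / 4 * σ`, and smaller
items are priced proportionally, so that half of this money buys the missing value
`3 / 5 - σ`. -/
noncomputable def pairPrice (σ x : ℝ) : ℝ :=
  if 3 / 5 - σ ≤ x then 1 - 5 / 4 * σ else (1 - 5 / 4 * σ) / (2 * (3 / 5 - σ)) * x

theorem basePrice_nonneg {x : ℝ} (hx : 0 ≤ x) : 0 ≤ basePrice x := by
  unfold basePrice
  split_ifs <;> linarith

theorem basePrice_mono {x y : ℝ} (h : x ≤ y) : basePrice x ≤ basePrice y := by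
  unfold basePrice
  split_ifs <;> linarith

theorem basePrice_le_one (x : ℝ) : basePrice x ≤ 1 := by
  unfold basePrice
  split_ifs <;> linarith

theorem basePrice_le_half {x : ℝ} (h : x < 3 / 5) : basePrice x ≤ 1 / 2 := by
  unfold basePrice
  split_ifs <;> linarith

theorem basePrice_le_mul {x : ℝ} (h : x < 3 / 5) : basePrice x ≤ 5 / 4 * x := by
  unfold basePrice
  split_ifs <;> linarith

theorem pairPrice_nonneg {σ x : ℝ} (hx : 0 ≤ x) (hσ : σ < 3 / 5) : 0 ≤ pairPrice σ x := by
  have h1 : 0 < 1 - 5 / 4 * σ := by linarith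
  have h2 : 0 < 3 / 5 - σ := by linarith
  unfold pairPrice
  split_ifs <;> positivity

theorem pairPrice_mono {σ x y : ℝ} (hσ : σ < 3 / 5) (h : x ≤ y) :
    pairPrice σ x ≤ pairPrice σ y := by
  have h1 : 0 < 1 - 5 / 4 * σ := by linarith
  have h2 : 0 < 3 / 5 - σ := by linarith
  unfold pairPrice
  split_ifs with h3 h4 h4
  · exact le_rfl
  · linarith
  · rw [div_mul_eq_mul_div, div_le_iff₀ (by positivity)]
    nlinarith
  · exact mul_le_mul_of_nonneg_left h (by positivity)

theorem pairPrice_le {σ : ℝ} (hσ : σ < 3 / 5) (x : ℝ) : pairPrice σ x ≤ 1 - 5 / 4 * σ := by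
  refine (pairPrice_mono hσ (le_max_left x (3 / 5 - σ))).trans (le_of_eq ?_)
  unfold pairPrice
  rw [if_pos (le_max_right _ _)]

/-- At basic prices every bundle of value `1` costs at least the whole budget. -/
theorem one_le_sum_basePrice {ι : Type*} (w : ι → ℝ) (hw : ∀ e, 0 ≤ w e)
    (S : Finset ι) (hS : 1 ≤ ∑ e ∈ S, w e) : 1 ≤ ∑ e ∈ S, basePrice (w e) := by
  have hsplit := Finset.sum_filter_add_sum_filter_not S (fun e => 2 / 5 ≤ w e) w
  have hsplit' := Finset.sum_filter_add_sum_filter_not S (fun e => 2 / 5 ≤ w e)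
    (fun e => basePrice (w e))
  have hsmall : ∑ e ∈ S.filter (fun e => ¬ 2 / 5 ≤ w e), basePrice (w e) =
      5 / 4 * ∑ e ∈ S.filter (fun e => ¬ 2 / 5 ≤ w e), w e := by
    rw [Finset.mul_sum]
    refine Finset.sum_congr rfl fun e he => ?_
    have := (Finset.mem_filter.1 he).2
    unfold basePrice
    rw [if_neg (by linarith), if_neg this]
  have hsmall0 : 0 ≤ ∑ e ∈ S.filter (fun e => ¬ 2 / 5 ≤ w e), w e :=
    Finset.sum_nonneg fun e _ => hw e
  have hbig : ∀ e ∈ S.filter (fun e => 2 / 5 ≤ w e), 1 / 2 ≤ basePrice (w e) := fun e he => by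
    have := (Finset.mem_filter.1 he).2
    unfold basePrice
    split_ifs <;> linarith
  rcases Nat.lt_or_ge (S.filter (fun e => 2 / 5 ≤ w e)).card 2 with hc | hc
  · rcases Nat.lt_or_ge (S.filter (fun e => 2 / 5 ≤ w e)).card 1 with h0 | h1
    · have : S.filter (fun e => 2 / 5 ≤ w e) = ∅ := Finset.card_eq_zero.1 (by omega)
      rw [this, Finset.sum_empty] at hsplit hsplit'
      linarith
    · have hc1 : (S.filter (fun e => 2 / 5 ≤ w e)).card = 1 := by omega
      obtain ⟨a, ha⟩ := Finset.card_eq_one.1 hc1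
      rw [ha] at hsplit hsplit' hbig
      rw [Finset.sum_singleton] at hsplit hsplit'
      have h2 := hbig a (by simp)
      rcases lt_or_ge (w a) (3 / 5) with h3 | h3
      · linarith
      · have : basePrice (w a) = 1 := by
          unfold basePrice
          rw [if_pos h3]
        linarith
  · have h1 := Finset.card_nsmul_le_sum _ _ _ hbig
    rw [nsmul_eq_mul] at h1
    have h2 : (2 : ℝ) ≤ ((S.filter (fun e => 2 / 5 ≤ w e)).card : ℝ) := by exact_mod_cast hc
    linarith

/-- The price of an item of value `x` that the agent can count on once she has bought two items of
values `a₁ ≥ a₂`: items better than `a₂` were sold earlier, at basic prices. -/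
noncomputable def mixedPrice (a₁ a₂ x : ℝ) : ℝ :=
  if x ≤ a₂ then pairPrice (a₁ + a₂) x else basePrice x

set_option maxHeartbeats 2000000 in
/-- Every bundle of value `1` costs at least the whole budget at mixed prices. Items of value at
least `s = 3 / 5 - a₁ - a₂` cost at least `1 / 4`, and at least `1 / 2` above value `2 / 5`, so
only bundles with at most three such items matter, and there the smaller items make up for the
rest. -/
theorem one_le_sum_mixedPrice {ι : Type*} (w : ι → ℝ) (hw : ∀ e, 0 ≤ w e) {a₁ a₂ : ℝ}
    (h12 : a₂ ≤ a₁) (hlt : a₁ + a₂ < 3 / 5) (hgt : 4 / 5 < a₁ + 2 * a₂)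
    (S : Finset ι) (hS : 1 ≤ ∑ e ∈ S, w e) : 1 ≤ ∑ e ∈ S, mixedPrice a₁ a₂ (w e) := by
  set s := 3 / 5 - (a₁ + a₂) with hs
  have hs0 : 0 < s := by linarith
  have hs1 : s < 1 / 10 := by linarith
  set κ := (1 - 5 / 4 * (a₁ + a₂)) / (2 * (3 / 5 - (a₁ + a₂))) with hκ
  have hκs : κ * s = 1 / 8 + 5 / 8 * s := by
    rw [hκ, ← hs]
    field_simp
    linarith
  have hκ1 : 15 / 8 ≤ κ := by
    by_contra hcon
    push Not at hcon
    nlinarith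
  have hsplit := Finset.sum_filter_add_sum_filter_not S (fun e => s ≤ w e) w
  have hsplit' := Finset.sum_filter_add_sum_filter_not S (fun e => s ≤ w e)
    (fun e => mixedPrice a₁ a₂ (w e))
  have hsmall : ∑ e ∈ S.filter (fun e => ¬ s ≤ w e), mixedPrice a₁ a₂ (w e) =
      κ * ∑ e ∈ S.filter (fun e => ¬ s ≤ w e), w e := by
    rw [Finset.mul_sum]
    refine Finset.sum_congr rfl fun e he => ?_
    have := (Finset.mem_filter.1 he).2
    unfold mixedPrice pairPrice
    rw [if_pos (by linarith), if_neg this]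
  set W := ∑ e ∈ S.filter (fun e => ¬ s ≤ w e), w e with hW
  have hW0 : 0 ≤ W := Finset.sum_nonneg fun e _ => hw e
  have hκW : 15 / 8 * W ≤ κ * W := mul_le_mul_of_nonneg_right hκ1 hW0
  have hκW1 : W < 1 / 10 + 3 / 2 * s ∨ 1 / 4 ≤ κ * W :=
    (lt_or_ge W _).imp_right fun h => by nlinarith
  have hκW2 : W < 1 / 10 + 1 / 2 * s ∨ 1 / 4 - 5 / 4 * s ≤ κ * W :=
    (lt_or_ge W _).imp_right fun h => by nlinarith
  have hbig : ∀ e ∈ S.filter (fun e => s ≤ w e),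
      (3 / 5 ≤ w e ∧ mixedPrice a₁ a₂ (w e) = 1) ∨
      (2 / 5 ≤ w e ∧ w e < 3 / 5 ∧ mixedPrice a₁ a₂ (w e) = 1 / 2) ∨
      (a₂ < w e ∧ w e < 2 / 5 ∧ mixedPrice a₁ a₂ (w e) = 5 / 4 * w e) ∨
      (w e ≤ a₂ ∧ mixedPrice a₁ a₂ (w e) = 1 / 4 + 5 / 4 * s) := fun e he => by
    have h1 := (Finset.mem_filter.1 he).2
    unfold mixedPrice
    split_ifs with h2
    · refine Or.inr (Or.inr (Or.inr ⟨h2, ?_⟩))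
      unfold pairPrice
      rw [if_pos h1]
      linarith
    · push Not at h2
      unfold basePrice
      split_ifs with h3 h4
      · exact Or.inl ⟨h3, rfl⟩
      · exact Or.inr (Or.inl ⟨h4, by linarith, rfl⟩)
      · exact Or.inr (Or.inr (Or.inl ⟨h2, by linarith, rfl⟩))
  have hquarter : ∀ e ∈ S.filter (fun e => s ≤ w e), 1 / 4 ≤ mixedPrice a₁ a₂ (w e) :=
    fun e he => by
      rcases hbig e he with h | h | h | h
      · linarith [h.2]
      · linarith [h.2.2]
      · linarith [h.2.2]
      · linarith [h.2]
  rcases Nat.lt_or_ge (S.filter (fun e => s ≤ w e)).card 4 with hc | hc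
  · classical
    obtain h | h | h | h : (S.filter (fun e => s ≤ w e)).card = 0 ∨
        (S.filter (fun e => s ≤ w e)).card = 1 ∨ (S.filter (fun e => s ≤ w e)).card = 2 ∨
        (S.filter (fun e => s ≤ w e)).card = 3 := by omega
    · rw [Finset.card_eq_zero.1 h, Finset.sum_empty] at hsplit hsplit'
      linarith
    · obtain ⟨x, hx⟩ := Finset.card_eq_one.1 h
      rw [hx, Finset.sum_singleton] at hsplit hsplit'
      rcases hbig x (by simp [hx]) with ⟨hx1, hx2⟩ | ⟨hx1, hx3, hx2⟩ | ⟨hx1, hx3, hx2⟩ | ⟨hx1, hx2⟩ <;>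
      linarith
    · obtain ⟨x, y, hxy, hx⟩ := Finset.card_eq_two.1 h
      rw [hx, Finset.sum_pair hxy] at hsplit hsplit'
      rcases hκW2 with hκW2 | hκW2 <;>
      rcases hbig x (by simp [hx]) with ⟨hx1, hx2⟩ | ⟨hx1, hx3, hx2⟩ | ⟨hx1, hx3, hx2⟩ | ⟨hx1, hx2⟩ <;>
      rcases hbig y (by simp [hx]) with ⟨hy1, hy2⟩ | ⟨hy1, hy3, hy2⟩ | ⟨hy1, hy3, hy2⟩ | ⟨hy1, hy2⟩ <;>
      linarith
    · obtain ⟨x, y, z, hxy, hxz, hyz, hx⟩ := Finset.card_eq_three.1 h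
      have hsum3 : ∀ f : ι → ℝ, ∑ e ∈ ({x, y, z} : Finset ι), f e = f x + f y + f z := fun f => by
        rw [Finset.sum_insert (by simp [hxy, hxz]), Finset.sum_pair hyz, add_assoc]
      rw [hx, hsum3] at hsplit hsplit'
      have qx := hquarter x (by simp [hx])
      have qy := hquarter y (by simp [hx])
      have qz := hquarter z (by simp [hx])
      have hor : ∀ e ∈ S.filter (fun e => s ≤ w e), 1 / 2 ≤ mixedPrice a₁ a₂ (w e) ∨
          mixedPrice a₁ a₂ (w e) = 5 / 4 * w e ∨
          (w e ≤ a₂ ∧ mixedPrice a₁ a₂ (w e) = 1 / 4 + 5 / 4 * s) := fun e he => by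
        rcases hbig e he with h | h | h | h
        · exact Or.inl (by linarith [h.2])
        · exact Or.inl h.2.2.ge
        · exact Or.inr (Or.inl h.2.2)
        · exact Or.inr (Or.inr h)
      rcases hor x (by simp [hx]) with hx1 | hx'
      · linarith
      rcases hor y (by simp [hx]) with hy1 | hy'
      · linarith
      rcases hor z (by simp [hx]) with hz1 | hz'
      · linarith
      clear hbig hquarter hor
      rcases hκW1 with hκW1 | hκW1 <;>
      rcases hx' with hx1 | ⟨hx1, hx2⟩ <;>
      rcases hy' with hy1 | ⟨hy1, hy2⟩ <;>
      rcases hz' with hz1 | ⟨hz1, hz2⟩ <;>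
      linarith
  · have h1 := Finset.card_nsmul_le_sum _ _ _ hquarter
    rw [nsmul_eq_mul] at h1
    have h2 : (4 : ℝ) ≤ ((S.filter (fun e => s ≤ w e)).card : ℝ) := by exact_mod_cast hc
    nlinarith

/-- The phases of the additive agent's strategy. Unassigned items are `R`, the agent holds `A`, of
value below `3 / 5`, and `q e` is the price (as a fraction of the agent's budget) at which an item
`e` outside `R` was sold; if `e` went to somebody else, this is a lower bound for what was paid.
The agent always bids on the most valuable unassigned item. -/
inductive AdditiveState {ι : Type*} [DecidableEq ι] (w : ι → ℝ) (M R A : Finset ι)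
    (q : ι → ℝ) : Prop
  /-- Nothing bought yet. -/
  | empty (hA : A = ∅)
      (hq : ∀ e ∈ M \ R, basePrice (w e) ≤ q e ∧ ∀ r ∈ R, basePrice (w r) ≤ q e)
  /-- One item bought. -/
  | single (a : ι) (hA : A = {a}) (ha : w a < 3 / 5) (hqa : q a ≤ basePrice (w a))
      (hr : ∀ r ∈ R, w r ≤ w a)
      (hq : ∀ e ∈ M \ R, basePrice (w e) ≤ q e ∧ ∀ r ∈ R, basePrice (w r) ≤ q e)
  /-- At the basic prices every further item is affordable. -/
  | proportional (hq : ∀ e ∈ M \ R, basePrice (w e) ≤ q e)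
      (hqA : ∑ e ∈ A, q e ≤ 5 / 4 * ∑ e ∈ A, w e) (hwA : ∑ e ∈ A, w e < 3 / 5)
      (hr : ∀ r ∈ R, w r < 3 / 5 ∧ ∑ e ∈ A, w e + w r ≤ 4 / 5 ∧
        (1 / 5 < w r → 3 / 5 ≤ ∑ e ∈ A, w e + w r))
  /-- Two items of values `a₁` and `a₂` were bought, and at the basic prices a third one might be
  too expensive, so the agent has switched to `pairPrice`. -/
  | pair (a₁ a₂ : ℝ) (h12 : a₂ ≤ a₁) (hlt : a₁ + a₂ < 3 / 5) (hgt : 4 / 5 < a₁ + 2 * a₂)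
      (hq : ∀ e ∈ M \ R, mixedPrice a₁ a₂ (w e) ≤ q e) (hr : ∀ r ∈ R, w r ≤ a₂)
      (hwA : ∑ e ∈ A, w e < 3 / 5)
      (hqA : ∑ e ∈ A, q e ≤ 5 / 4 * (a₁ + a₂) + (1 - 5 / 4 * (a₁ + a₂)) /
        (2 * (3 / 5 - (a₁ + a₂))) * (∑ e ∈ A, w e - (a₁ + a₂)))
      (hσ : ∑ e ∈ A, w e = a₁ + a₂ ∨ ∀ r ∈ R, w r < 3 / 5 - (a₁ + a₂))

theorem forall_sdiff_erase_update {ι : Type*} [DecidableEq ι] {M R : Finset ι} {q : ι → ℝ}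
    {P : ι → ℝ → Prop} {e : ι} {p : ℝ} (h : ∀ x ∈ M \ R, P x (q x)) (he : P e p) :
    ∀ x ∈ M \ R.erase e, P x (Function.update q e p x) := by
  intro x hx
  by_cases hxe : x = e
  · subst hxe
    simpa using he
  · rw [Function.update_of_ne hxe]
    refine h x ?_
    simp only [Finset.mem_sdiff, Finset.mem_erase, not_and] at hx ⊢
    exact ⟨hx.1, fun hR => hx.2 hxe hR⟩

theorem sum_update_notMem {ι : Type*} [DecidableEq ι] {A : Finset ι} {q : ι → ℝ}
    {e : ι} {p : ℝ} (he : e ∉ A) : ∑ x ∈ A, Function.update q e p x = ∑ x ∈ A, q x :=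
  Finset.sum_congr rfl fun x hx => Function.update_of_ne (fun h : x = e => he (h ▸ hx)) _ _

theorem sum_insert_update {ι : Type*} [DecidableEq ι] {A : Finset ι} {q : ι → ℝ}
    {e : ι} {p : ℝ} (he : e ∉ A) :
    ∑ x ∈ insert e A, Function.update q e p x = p + ∑ x ∈ A, q x := by
  rw [Finset.sum_insert he, Function.update_self, sum_update_notMem he]

/-- One round of the bidding game for an additive agent: `p` is her bid, and she bids on `e`. -/
theorem AdditiveState.step {ι : Type*} [DecidableEq ι] {w : ι → ℝ} {M R A : Finset ι}
    {q : ι → ℝ} (hw : ∀ e, 0 ≤ w e) (hAR : Disjoint R A) (h : AdditiveState w M R A q)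
    {e : ι} (he : e ∈ R) (hmax : ∀ r ∈ R, w r ≤ w e) :
    ∃ p, 0 ≤ p ∧ ∑ x ∈ A, q x + p ≤ 1 ∧
      (∀ e' ∈ R, AdditiveState w M (R.erase e') A (Function.update q e' p)) ∧
      (AdditiveState w M (R.erase e) (insert e A) (Function.update q e p) ∨
        3 / 5 ≤ ∑ x ∈ insert e A, w x) := by
  have hdis : ∀ x ∈ R, x ∉ A := fun x hx hxA => Finset.disjoint_left.1 hAR hx hxA
  have hsub : ∀ e', ∀ r ∈ R.erase e', r ∈ R := fun e' r hr => Finset.mem_of_mem_erase hr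
  -- the recorded prices after a round at price `basePrice (w e)`, whichever item `e'` was sold
  have hlose : (∀ x ∈ M \ R, basePrice (w x) ≤ q x ∧ ∀ r ∈ R, basePrice (w r) ≤ q x) →
      ∀ e' ∈ R, ∀ x ∈ M \ R.erase e',
        basePrice (w x) ≤ Function.update q e' (basePrice (w e)) x ∧
        ∀ r ∈ R.erase e', basePrice (w r) ≤ Function.update q e' (basePrice (w e)) x :=
    fun hq e' he' => forall_sdiff_erase_update
      (P := fun x y => basePrice (w x) ≤ y ∧ ∀ r ∈ R.erase e', basePrice (w r) ≤ y)
      (fun x hx => ⟨(hq x hx).1, fun r hr => (hq x hx).2 r (hsub _ r hr)⟩)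
      ⟨basePrice_mono (hmax e' he'), fun r hr => basePrice_mono (hmax r (hsub _ r hr))⟩
  cases h with
  | empty hA hq =>
    subst hA
    refine ⟨basePrice (w e), basePrice_nonneg (hw e), by simpa using basePrice_le_one (w e),
      fun e' he' => .empty rfl (hlose hq e' he'), ?_⟩
    rcases lt_or_ge (w e) (3 / 5) with hlt | hge
    · exact Or.inl (.single e (by simp) hlt (by simp) (fun r hr => hmax r (hsub _ r hr))
        (hlose hq e he))
    · exact Or.inr (by simpa using hge)
  | single a hA ha hqa hr hq =>
    subst hA
    have hea := hr e he
    have hne : ∀ x ∈ R, x ≠ a := fun x hx => by simpa using hdis x hx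
    have h1 := basePrice_le_half ha
    have h2 := basePrice_le_half (hea.trans_lt ha)
    refine ⟨basePrice (w e), basePrice_nonneg (hw e), by
      rw [Finset.sum_singleton]; linarith, fun e' he' => .single a rfl ha ?_
        (fun r hr' => hr r (hsub _ r hr')) (hlose hq e' he'), ?_⟩
    · rwa [Function.update_of_ne (hne e' he').symm]
    have hsum : ∑ x ∈ insert e {a}, w x = w a + w e := by
      rw [Finset.sum_pair (hne e he), add_comm]
    have hqsum : ∑ x ∈ insert e {a}, Function.update q e (basePrice (w e)) x ≤
        5 / 4 * (w a + w e) := by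
      rw [sum_insert_update (hdis e he), Finset.sum_singleton]
      linarith [basePrice_le_mul ha, basePrice_le_mul (hea.trans_lt ha)]
    rcases lt_or_ge (w a + w e) (3 / 5) with hlt | hge
    swap
    · exact Or.inr (hsum ▸ hge)
    refine Or.inl ?_
    rcases le_or_gt (w a + 2 * w e) (4 / 5) with h45 | h45
    · refine .proportional (fun x hx => (hlose hq e he x hx).1) (hsum ▸ hqsum) (hsum ▸ hlt)
        fun r hr' => ?_
      rw [hsum]
      have := hmax r (hsub _ r hr')
      exact ⟨by linarith, by linarith, fun h => by linarith⟩
    · refine .pair (w a) (w e) hea hlt h45 ?_ (fun r hr' => hmax r (hsub _ r hr'))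
        (hsum ▸ hlt) (by rw [hsum]; linarith) (Or.inl hsum)
      have hbase : 1 - 5 / 4 * (w a + w e) ≤ basePrice (w e) := by
        unfold basePrice
        rw [if_neg (by linarith), if_neg (by linarith)]
        linarith
      refine forall_sdiff_erase_update (P := fun x y => mixedPrice (w a) (w e) (w x) ≤ y) ?_ ?_
      · intro x hx
        unfold mixedPrice
        split_ifs
        · exact ((pairPrice_le hlt _).trans hbase).trans ((hq x hx).2 e he)
        · exact (hq x hx).1
      · unfold mixedPrice
        rw [if_pos le_rfl]
        exact (pairPrice_le hlt _).trans hbase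
  | proportional hq hqA hwA hr =>
    obtain ⟨he1, he2, he3⟩ := hr e he
    have hle := basePrice_le_mul he1
    have hq' : ∀ e' ∈ R, ∀ x ∈ M \ R.erase e',
        basePrice (w x) ≤ Function.update q e' (basePrice (w e)) x := fun e' he' =>
      forall_sdiff_erase_update (P := fun x y => basePrice (w x) ≤ y) hq
        (basePrice_mono (hmax e' he'))
    refine ⟨basePrice (w e), basePrice_nonneg (hw e), by linarith, fun e' he' =>
      .proportional (hq' e' he') (by rwa [sum_update_notMem (hdis e' he')]) hwA
        (fun r hr' => hr r (hsub _ r hr')), ?_⟩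
    have hsum : ∑ x ∈ insert e A, w x = w e + ∑ x ∈ A, w x := Finset.sum_insert (hdis e he)
    rcases lt_or_ge (w e + ∑ x ∈ A, w x) (3 / 5) with hlt | hge
    swap
    · exact Or.inr (hsum ▸ hge)
    have he5 : w e ≤ 1 / 5 := by
      by_contra hcon
      push Not at hcon
      linarith [he3 hcon]
    refine Or.inl (.proportional (hq' e he) ?_ (hsum ▸ hlt) fun r hr' => ?_)
    · rw [sum_insert_update (hdis e he), hsum]
      linarith
    · rw [hsum]
      have := hmax r (hsub _ r hr')
      exact ⟨by linarith, by linarith, fun h => by linarith⟩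
  | pair a₁ a₂ h12 hlt hgt hq hr hwA hqA hσ =>
    have hq' : ∀ e' ∈ R, ∀ x ∈ M \ R.erase e',
        mixedPrice a₁ a₂ (w x) ≤ Function.update q e' (pairPrice (a₁ + a₂) (w e)) x :=
      fun e' he' => forall_sdiff_erase_update (P := fun x y => mixedPrice a₁ a₂ (w x) ≤ y) hq (by
        unfold mixedPrice
        rw [if_pos (hr e' he')]
        exact pairPrice_mono hlt (hmax e' he'))
    have hsum : ∑ x ∈ insert e A, w x = w e + ∑ x ∈ A, w x := Finset.sum_insert (hdis e he)
    refine ⟨pairPrice (a₁ + a₂) (w e), pairPrice_nonneg (hw e) hlt, ?_, fun e' he' =>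
      .pair a₁ a₂ h12 hlt hgt (hq' e' he') (fun r hr' => hr r (hsub _ r hr')) hwA
        (by rwa [sum_update_notMem (hdis e' he')])
        (hσ.imp_right fun h r hr' => h r (hsub _ r hr')), ?_⟩
    · rcases lt_or_ge (w e) (3 / 5 - (a₁ + a₂)) with hsm | hbig
      · -- half of the money buys the missing value, the other half covers the overshoot
        have hκ : 0 < (1 - 5 / 4 * (a₁ + a₂)) / (2 * (3 / 5 - (a₁ + a₂))) :=
          div_pos (by linarith) (by linarith)
        have hκs : (1 - 5 / 4 * (a₁ + a₂)) / (2 * (3 / 5 - (a₁ + a₂))) *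
            (2 * (3 / 5 - (a₁ + a₂))) = 1 - 5 / 4 * (a₁ + a₂) :=
          div_mul_cancel₀ _ (by linarith)
        unfold pairPrice
        rw [if_neg (by linarith)]
        nlinarith
      · rcases hσ with hσ | hσ
        · rw [hσ, sub_self, mul_zero, add_zero] at hqA
          linarith [pairPrice_le hlt (w e)]
        · linarith [hσ e he]
    · rcases lt_or_ge (w e + ∑ x ∈ A, w x) (3 / 5) with hlt' | hge
      swap
      · exact Or.inr (hsum ▸ hge)
      -- otherwise `A` has value `a₁ + a₂` and winning `e` reaches the target
      have hsm : w e < 3 / 5 - (a₁ + a₂) := by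
        rcases hσ with hσ | hσ
        · linarith
        · exact hσ e he
      refine Or.inl (.pair a₁ a₂ h12 hlt hgt (hq' e he) (fun r hr' => hr r (hsub _ r hr'))
        (hsum ▸ hlt') ?_ (Or.inr fun r hr' => (hmax r (hsub _ r hr')).trans_lt hsm))
      rw [sum_insert_update (hdis e he), hsum]
      unfold pairPrice
      rw [if_neg (by linarith)]
      linarith

/-- When all items are sold, the agent has money left, but every bundle of value `1` was sold for
at least her whole budget. -/
theorem AdditiveState.final {ι : Type*} [DecidableEq ι] {w : ι → ℝ} {M A : Finset ι}
    {q : ι → ℝ} (hw : ∀ e, 0 ≤ w e) (h : AdditiveState w M ∅ A q) :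
    ∑ e ∈ A, q e < 1 ∧ (∀ e ∈ M, 0 ≤ q e) ∧
      ∀ S ⊆ M, 1 ≤ ∑ e ∈ S, w e → 1 ≤ ∑ e ∈ S, q e := by
  have hbase : (∀ e ∈ M \ ∅, basePrice (w e) ≤ q e) → (∀ e ∈ M, 0 ≤ q e) ∧
      ∀ S ⊆ M, 1 ≤ ∑ e ∈ S, w e → 1 ≤ ∑ e ∈ S, q e := fun hq => by
    rw [Finset.sdiff_empty] at hq
    exact ⟨fun e he => (basePrice_nonneg (hw e)).trans (hq e he), fun S hS h1 =>
      (one_le_sum_basePrice w hw S h1).trans (Finset.sum_le_sum fun e he => hq e (hS he))⟩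
  cases h with
  | empty hA hq => exact ⟨by simp [hA], hbase fun e he => (hq e he).1⟩
  | single a hA ha hqa hr hq =>
    refine ⟨?_, hbase fun e he => (hq e he).1⟩
    rw [hA, Finset.sum_singleton]
    linarith [basePrice_le_half ha]
  | proportional hq hqA hwA hr => exact ⟨by linarith, hbase hq⟩
  | pair a₁ a₂ h12 hlt hgt hq hr hwA hqA hσ =>
    rw [Finset.sdiff_empty] at hq
    refine ⟨?_, fun e he => le_trans ?_ (hq e he), fun S hS h1 =>
      (one_le_sum_mixedPrice w hw h12 hlt hgt S h1).trans
        (Finset.sum_le_sum fun e he => hq e (hS he))⟩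
    · have hκ : 0 < (1 - 5 / 4 * (a₁ + a₂)) / (2 * (3 / 5 - (a₁ + a₂))) :=
        div_pos (by linarith) (by linarith)
      have hκs : (1 - 5 / 4 * (a₁ + a₂)) / (2 * (3 / 5 - (a₁ + a₂))) *
          (2 * (3 / 5 - (a₁ + a₂))) = 1 - 5 / 4 * (a₁ + a₂) :=
        div_mul_cancel₀ _ (by linarith)
      nlinarith
    · unfold mixedPrice
      split_ifs
      · exact pairPrice_nonneg (hw e) hlt
      · exact basePrice_nonneg (hw e)

/-- An additive agent with share `1` can secure `3 / 5`. If all items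
were sold before she reached it, the recorded prices would contradict the certificate. -/
theorem hasStrategy_of_additive {ι : Type*} [DecidableEq ι] {M : Finset ι}
    {u : Finset ι → ℝ} {b : ℝ} {lam : Finset ι → ℝ} (hb : 0 < b) (hb1 : b ≤ 1)
    (hmono : ∀ S T : Finset ι, S ⊆ T → T ⊆ M → u S ≤ u T)
    (hu : IsAdditiveOn u M) (h : IsCertificate M u b 1 lam) : HasStrategy M u b (3 / 5) := by
  obtain ⟨w, hw, huw⟩ := hu
  refine HasStrategy.of_step hmono (fun R A β B => R ⊆ M ∧ A ⊆ M ∧ Disjoint R A ∧ 0 ≤ B ∧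
    ∃ q : ι → ℝ, b * ∑ e ∈ M \ (R ∪ A), q e ≤ 1 - b - B ∧ b * (1 - ∑ e ∈ A, q e) ≤ β ∧
      AdditiveState w M R A q) ?_ ?_
  · refine ⟨subset_rfl, by simp, by simp, by linarith, fun _ => 0, by simp, by simp, ?_⟩
    exact .empty rfl (by simp)
  · rintro R A β B ⟨hR, hA, hRA, hB, q, hqB, hqβ, hq⟩
    refine ⟨hR, hA, ?_, fun hne => ?_⟩
    · rintro rfl
      obtain ⟨h1, h2, h3⟩ := hq.final hw
      have h4 := h.one_le_mul_sum q h2 fun S hS h1 => h3 S hS (huw S hS ▸ h1)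
      have h5 := Finset.sum_sdiff (f := q) hA
      rw [Finset.empty_union] at hqB
      rw [← h5] at h4
      nlinarith
    · obtain ⟨e, he, hmax⟩ := Finset.exists_max_image R w hne
      obtain ⟨p, hp0, hp1, hl, hwin⟩ := hq.step hw hRA he hmax
      have heA : e ∉ A := Finset.disjoint_left.1 hRA he
      refine ⟨b * p, by positivity, by nlinarith, e, he, ?_, ?_⟩
      · have hins : insert e A ⊆ M := Finset.insert_subset (hR he) hA
        rcases hwin with hwin | hwin
        · refine Or.inl ⟨(Finset.erase_subset _ _).trans hR, hins, ?_, hB,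
            Function.update q e p, ?_, ?_, hwin⟩
          · rw [Finset.disjoint_insert_right]
            exact ⟨Finset.notMem_erase _ _, hRA.mono_left (Finset.erase_subset _ _)⟩
          · have hset : R.erase e ∪ insert e A = R ∪ A := by
              ext x
              by_cases hx : x = e <;> simp [hx, he]
            rw [hset, sum_update_notMem (by simp [he])]
            exact hqB
          · rw [sum_insert_update heA]
            linarith
        · exact Or.inr (by rwa [huw _ hins])
      · intro e' he' p' hp hpB
        have heA' : e' ∉ A := Finset.disjoint_left.1 hRA he'
        refine ⟨(Finset.erase_subset _ _).trans hR, hA,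
          hRA.mono_left (Finset.erase_subset _ _), by linarith, Function.update q e' p, ?_, ?_,
          hl e' he'⟩
        · have hset : M \ (R.erase e' ∪ A) = insert e' (M \ (R ∪ A)) := by
            ext x
            by_cases hx : x = e'
            · simp [hx, heA', hR he']
            · simp [hx]
          rw [hset, sum_insert_update (by simp [he'])]
          linarith
        · rwa [sum_update_notMem heA']

/-! ### All agents together -/

/-- Each agent can secure the fraction of her anyprice share that belongs to her class. A
valuation may lie in several classes, in which case the best guarantee is meant. -/
theorem exists_hasStrategy {ι : Type*} [DecidableEq ι] {M : Finset ι} {u : Finset ι → ℝ} {b : ℝ}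
    (hb : 0 < b) (hb1 : b ≤ 1) (hnorm : u ∅ = 0) (hnonneg : ∀ S ⊆ M, 0 ≤ u S)
    (hmono : ∀ S T : Finset ι, S ⊆ T → T ⊆ M → u S ≤ u T) :
    ∃ τ, HasStrategy M u b τ ∧ (IsSubmodularOn u M → 1 / 3 * APS b u M ≤ τ) ∧
      (IsAdditiveOn u M → 3 / 5 * APS b u M ≤ τ) ∧ (IsUnitDemandOn u M → APS b u M ≤ τ) := by
  rcases (APS_nonneg M u b).eq_or_lt with h0 | hpos
  · rw [← h0]
    exact ⟨0, .of_nonpos hb hnonneg le_rfl, by simp, by simp, by simp⟩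
  obtain ⟨lam, hlam⟩ := exists_isCertificate hpos
  set z := APS b u M with hz
  have hmono' : ∀ S T : Finset ι, S ⊆ T → T ⊆ M → u S / z ≤ u T / z := fun S T hST hT =>
    div_le_div_of_nonneg_right (hmono S T hST hT) hpos.le
  by_cases hU : IsUnitDemandOn u M
  · exact ⟨z, hasStrategy_of_unitDemand hb hb1 hpos hmono hU hlam, fun _ => by linarith,
      fun _ => by linarith, fun _ => le_rfl⟩
  by_cases hAdd : IsAdditiveOn u M
  · have hAdd' : IsAdditiveOn (fun S => u S / z) M := by
      obtain ⟨w, hw, huw⟩ := hAdd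
      exact ⟨fun e => w e / z, fun e => div_nonneg (hw e) hpos.le, fun S hS => by
        simp only [huw S hS, Finset.sum_div]⟩
    exact ⟨3 / 5 * z, .of_div hpos (hasStrategy_of_additive hb hb1 hmono' hAdd' (hlam.div hpos)),
      fun _ => by linarith, fun _ => le_rfl, fun h => absurd h hU⟩
  by_cases hSub : IsSubmodularOn u M
  · have hSub' : IsSubmodularOn (fun S => u S / z) M := fun S T hS hT => by
      simp only [← add_div]
      exact div_le_div_of_nonneg_right (hSub S T hS hT) hpos.le
    exact ⟨1 / 3 * z, .of_div hpos (hasStrategy_of_submodular hb hb1 (by simp [hnorm]) hmono' hSub'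
      (hlam.div hpos)), fun _ => le_rfl, fun h => absurd h hAdd, fun h => absurd h hU⟩
  · exact ⟨0, .of_nonpos hb hnonneg le_rfl, fun h => absurd h hSub, fun h => absurd h hAdd,
      fun h => absurd h hU⟩

theorem ensemble_submodular_additive_unitDemand_APS
    {ι : Type*} [DecidableEq ι] (M : Finset ι) (n : ℕ)
    (v : Fin n → Finset ι → ℝ) (b : Fin n → ℝ)
    (hb : ∀ i, 0 < b i ∧ b i ≤ 1) (hbsum : ∑ i, b i = 1)
    (hnorm : ∀ i, v i ∅ = 0)
    (hnonneg : ∀ i, ∀ S ⊆ M, 0 ≤ v i S)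
    (hmono : ∀ i, ∀ S T : Finset ι, S ⊆ T → T ⊆ M → v i S ≤ v i T)
    (hclass : ∀ i, IsSubmodularOn (v i) M ∨ IsAdditiveOn (v i) M ∨ IsUnitDemandOn (v i) M) :
    ∃ A : Fin n → Finset ι,
      (∀ i, A i ⊆ M) ∧
      (∀ i j, i ≠ j → Disjoint (A i) (A j)) ∧
      (∀ i, IsSubmodularOn (v i) M → (1 / 3 : ℝ) * APS (b i) (v i) M ≤ v i (A i)) ∧
      (∀ i, IsAdditiveOn (v i) M → (3 / 5 : ℝ) * APS (b i) (v i) M ≤ v i (A i)) ∧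
      (∀ i, IsUnitDemandOn (v i) M → APS (b i) (v i) M ≤ v i (A i)) := by
  have hn : 0 < n := by
    rcases Nat.eq_zero_or_pos n with rfl | hn
    · simp at hbsum
    · exact hn
  choose τ hτ hsub hadd hunit using fun i =>
    exists_hasStrategy (hb i).1 (hb i).2 (hnorm i) (hnonneg i) (hmono i)
  choose I hI hI0 using hτ
  obtain ⟨A, hAM, hdisj, hval⟩ := exists_allocation_of_invariants M hn v τ I hI M.card M
    (fun _ => ∅) b rfl subset_rfl (by simp) (by simp) (by simp) (by simpa [hbsum] using hI0)
  exact ⟨A, hAM, hdisj, fun i h => (hsub i h).trans (hval i),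
    fun i h => (hadd i h).trans (hval i), fun i h => (hunit i h).trans (hval i)⟩
end

section
/- Let M be a finite set of items, v : 2^M → ℝ≥0 a valuation, e ∈ M an item, and let 0 < b_j ≤ b_i < 1 with b_i + b_j ≤ 1. Then APS(b_j/(1 − b_i), v restricted to subsets of M \ {e}, M \ {e}) ≥ APS(b_j, v, M). That is, removing one item and scaling the entitlement up by the factor 1/(1 − b_i) cannot decrease the anyprice share, provided the removed agent's entitlement b_i is at least b_j. -/
/-!
Every value `z` attainable for `(bj, M)` is attainable for `(bj / (1 - bi), M.erase e)`: condition
the weights on the bundles avoiding `e`. The bundles containing `e` carry total weight at most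
`bj ≤ bi`, so the remaining weight `T` is at least `1 - bi > 0`, and dividing by `T` turns a load
of at most `bj` on an item into one of at most `bj / (1 - bi)`. Since the anyprice share is a real
`sSup`, monotonicity also requires the larger set of values to be bounded: an attainable `z` is at
most `v S` for some bundle `S` of positive weight.
-/

open Finset

theorem APS_remove_item_rescale
    {ι : Type*} [DecidableEq ι] (M : Finset ι) (v : Finset ι → ℝ)
    (hnonneg : ∀ S ⊆ M, 0 ≤ v S)
    (e : ι) (he : e ∈ M) (bi bj : ℝ)
    (hbj : 0 < bj) (hji : bj ≤ bi) (hbi : bi < 1) (hsum : bi + bj ≤ 1) :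
    APS bj v M ≤ APS (bj / (1 - bi)) v (M.erase e) := by
  have hsub : (M.erase e).powerset ⊆ M.powerset :=
    Finset.powerset_mono.2 (Finset.erase_subset e M)
  have hfilter : M.powerset.filter (fun S => e ∉ S) = (M.erase e).powerset := by
    ext S
    simp [Finset.subset_erase]
  unfold APS
  apply Real.sSup_le
  · rintro z ⟨hz, lam, hlam, hone, hsupp, hload⟩
    apply le_csSup
    · refine ⟨∑ S ∈ (M.erase e).powerset, v S, ?_⟩
      rintro w ⟨-, mu, -, hmu, hw, -⟩
      obtain ⟨S, hS, hne⟩ : ∃ S ∈ (M.erase e).powerset, mu S ≠ 0 :=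
        Finset.exists_ne_zero_of_sum_ne_zero (by rw [hmu]; exact one_ne_zero)
      calc w ≤ v S := not_lt.1 fun h => hne (hw S hS h)
        _ ≤ _ := Finset.single_le_sum
          (fun U hU => hnonneg U (Finset.mem_powerset.1 (hsub hU))) hS
    · set T := ∑ S ∈ (M.erase e).powerset, lam S with hTdef
      have hT : 1 - bi ≤ T := by
        have hsplit := Finset.sum_filter_add_sum_filter_not M.powerset (fun S => e ∈ S) lam
        rw [hfilter, hone] at hsplit
        linarith [hload e he]
      have hTpos : 0 < T := by linarith
      refine ⟨hz, fun S => lam S / T, fun S => div_nonneg (hlam S) hTpos.le, ?_, ?_, ?_⟩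
      · rw [← Finset.sum_div, ← hTdef, div_self hTpos.ne']
      · intro S hS h
        simp [hsupp S (hsub hS) h]
      · intro f hf
        rw [← Finset.sum_div]
        have hle : ∑ S ∈ (M.erase e).powerset.filter (fun S => f ∈ S), lam S ≤ bj :=
          (Finset.sum_le_sum_of_subset_of_nonneg (Finset.filter_subset_filter _ hsub)
            fun S _ _ => hlam S).trans (hload f (Finset.mem_of_mem_erase hf))
        exact div_le_div₀ hbj.le hle (by linarith) hT
  · exact Real.sSup_nonneg fun z hz => hz.1
end

section
/- Let M be a finite set of items, v : 2^M → ℝ≥0 a monotone valuation, n ≥ 2 an integer, and e ∈ M an item. Then MMS_{n−1}(v restricted to subsets of M \ {e}, M \ {e}) ≥ MMS_n(v, M). That is, in the equal-entitlement setting, removing one agent and one item cannot decrease the maximin share of any remaining agent. -/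
/-!
Given a partition of `M` into `n` bundles, dissolve the bundle that contains `e`, discard `e`, and
give the leftover items to one of the other `n - 1 ≥ 1` bundles. This partitions `M.erase e`, and by
monotonicity no surviving bundle loses value, so the minimum does not decrease
(`exists_partition_erase`). Passing to suprema needs only that the values on the right are bounded
above (by `v M`) and nonnegative.
-/

open Finset

/-- Any partition of `M` into `m + 2` bundles yields a partition of `M.erase e` into `m + 1`
bundles whose minimum value is at least as large: the bundle containing `e` is dissolved and its
other items are handed to the first of the remaining bundles. -/
lemma exists_partition_erase {ι : Type*} [DecidableEq ι] (M : Finset ι) (v : Finset ι → ℝ)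
    (hmono : ∀ S T : Finset ι, S ⊆ T → T ⊆ M → v S ≤ v T) (m : ℕ) (e : ι) (he : e ∈ M)
    (B : Fin (m + 2) → Finset ι) (hdisj : ∀ i j, i ≠ j → Disjoint (B i) (B j))
    (hunion : Finset.univ.biUnion B = M) :
    ∃ C : Fin (m + 1) → Finset ι, (∀ i j, i ≠ j → Disjoint (C i) (C j)) ∧
      Finset.univ.biUnion C = M.erase e ∧ ⨅ i, v (B i) ≤ ⨅ i, v (C i) := by
  obtain ⟨k, hk⟩ : ∃ k, e ∈ B k := by
    rw [← hunion] at he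
    simpa using he
  -- An item lies in only one bundle.
  have huniq : ∀ x i j, x ∈ B i → x ∈ B j → i = j := by
    intro x i j hi hj
    by_contra hij
    exact Finset.disjoint_left.mp (hdisj i j hij) hi hj
  let C : Fin (m + 1) → Finset ι := fun i =>
    B (k.succAbove i) ∪ (if i = 0 then (B k).erase e else ∅)
  have hmem : ∀ x i, x ∈ C i ↔ x ∈ B (k.succAbove i) ∨ (i = 0 ∧ x ≠ e ∧ x ∈ B k) := by
    intro x i
    by_cases h : i = 0 <;> simp [C, h]
  have hC : Finset.univ.biUnion C = M.erase e := by
    ext x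
    simp only [Finset.mem_biUnion, Finset.mem_univ, true_and, Finset.mem_erase, hmem, ← hunion]
    constructor
    · rintro ⟨i, hx | ⟨-, hxe, hx⟩⟩
      · refine ⟨?_, _, hx⟩
        rintro rfl
        exact Fin.succAbove_ne k i (huniq _ _ _ hx hk)
      · exact ⟨hxe, k, hx⟩
    · rintro ⟨hxe, j, hx⟩
      by_cases hj : j = k
      · subst hj
        exact ⟨0, Or.inr ⟨rfl, hxe, hx⟩⟩
      · obtain ⟨i, rfl⟩ := Fin.exists_succAbove_eq hj
        exact ⟨i, Or.inl hx⟩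
  refine ⟨C, ?_, hC, ?_⟩
  · intro i j hij
    rw [Finset.disjoint_left]
    intro x hi hj
    rw [hmem] at hi hj
    rcases hi with hi | ⟨hi0, -, hi⟩ <;> rcases hj with hj | ⟨hj0, -, hj⟩
    · exact hij (Fin.succAbove_right_injective (huniq _ _ _ hi hj))
    · exact Fin.succAbove_ne k i (huniq _ _ _ hi hj)
    · exact Fin.succAbove_ne k j (huniq _ _ _ hj hi)
    · exact hij (hi0.trans hj0.symm)
  · refine le_ciInf fun i => (ciInf_le (Set.finite_range _).bddBelow (k.succAbove i)).trans ?_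
    refine hmono _ _ Finset.subset_union_left ?_
    exact (Finset.subset_biUnion_of_mem C (Finset.mem_univ i)).trans
      (hC.trans_subset (Finset.erase_subset e M))

theorem MMS_remove_agent_and_item
    {ι : Type*} [DecidableEq ι] (M : Finset ι) (v : Finset ι → ℝ)
    (hnonneg : ∀ S ⊆ M, 0 ≤ v S)
    (hmono : ∀ S T : Finset ι, S ⊆ T → T ⊆ M → v S ≤ v T)
    (n : ℕ) (hn : 2 ≤ n) (e : ι) (he : e ∈ M) :
    MMS n v M ≤ MMS (n - 1) v (M.erase e) := by
  obtain ⟨m, rfl⟩ : ∃ m, n = m + 2 := ⟨n - 2, by omega⟩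
  change MMS (m + 2) v M ≤ MMS (m + 1) v (M.erase e)
  have hsub : ∀ (C : Fin (m + 1) → Finset ι), Finset.univ.biUnion C = M.erase e →
      ∀ i, C i ⊆ M := fun C hC i =>
    (Finset.subset_biUnion_of_mem C (Finset.mem_univ i)).trans
      (hC.trans_subset (Finset.erase_subset e M))
  unfold MMS
  refine Real.sSup_le ?_ (Real.sSup_nonneg ?_)
  · rintro z ⟨B, hdisj, hunion, rfl⟩
    obtain ⟨C, hCdisj, hC, hle⟩ := exists_partition_erase M v hmono m e he B hdisj hunion
    refine hle.trans (le_csSup ⟨v M, ?_⟩ ⟨C, hCdisj, hC, rfl⟩)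
    -- By monotonicity, `v M` bounds every bundle, so the supremum is a genuine one.
    rintro z ⟨D, -, hD, rfl⟩
    exact (ciInf_le (Set.finite_range _).bddBelow 0).trans
      (hmono _ _ (hsub D hD 0) subset_rfl)
  · rintro z ⟨D, -, hD, rfl⟩
    exact Real.iInf_nonneg fun i => hnonneg _ (hsub D hD i)
end
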